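/- Let k be a positive integer. For all series f, g ∈ ℂ₀⟨⟨z₁,…,z_k⟩⟩ one has Reta(f ⊡ g) = Reta(f) ⊡ Reta(g), where ⊡ denotes boxed convolution. (Equivalently, in terms of distributions: η_{μ ⊠ ν} = η_μ ⊡ η_ν for all μ, ν ∈ D_alg(k), where μ ⊠ ν is the free multiplicative convolution, determined by R_{μ⊠ν} = R_μ ⊡ R_ν.) -/

import Mathlib

open Finset

attribute [local instance] Classical.propDecidable

open scoped ComplexOrder

namespace BBP

/-- Partitions of `{1,…,m}` modeled as `Finpartition`s of `univ : Finset (Fin m)`. -/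
abbrev FP (m : ℕ) := Finpartition (Finset.univ : Finset (Fin m))

noncomputable instance (m : ℕ) : Fintype (FP m) :=
  Fintype.ofInjective (fun π : FP m => π.parts) fun a b h => by
    cases a; cases b; simpa using h

/-- `x` is the minimum of the set `C`. -/
def IsMinOf {m : ℕ} (x : Fin m) (C : Finset (Fin m)) : Prop :=
  x ∈ C ∧ ∀ y ∈ C, x ≤ y

/-- `x` is the maximum of the set `C`. -/
def IsMaxOf {m : ℕ} (x : Fin m) (C : Finset (Fin m)) : Prop :=
  x ∈ C ∧ ∀ y ∈ C, y ≤ x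

/-- `a` and `b` lie in one block of `π`. -/
def SameBlock {m : ℕ} (π : FP m) (a b : Fin m) : Prop :=
  ∃ B ∈ π.parts, a ∈ B ∧ b ∈ B

/-- `π` is non-crossing: if `i<j<k<l`, `i,k` in one block and `j,l` in one block,
then all of them are in one block. -/
def IsNC {m : ℕ} (π : FP m) : Prop :=
  ∀ i j k l : Fin m, i < j → j < k → k < l →
    SameBlock π i k → SameBlock π j l → SameBlock π i j

/-- `A` embraces `B` : `min A ≤ min B` and `max B ≤ max A`. -/
def Embraces {m : ℕ} (A B : Finset (Fin m)) : Prop :=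
  ∃ a₁ a₂ b₁ b₂ : Fin m, IsMinOf a₁ A ∧ IsMaxOf a₂ A ∧ IsMinOf b₁ B ∧ IsMaxOf b₂ B ∧
    a₁ ≤ b₁ ∧ b₂ ≤ a₂

/-- `B` strictly embraces `A` : `min B < min A` and `max A < max B`. -/
def StrictlyEmbraces {m : ℕ} (B A : Finset (Fin m)) : Prop :=
  ∃ b₁ b₂ a₁ a₂ : Fin m, IsMinOf b₁ B ∧ IsMaxOf b₂ B ∧ IsMinOf a₁ A ∧ IsMaxOf a₂ A ∧
    b₁ < a₁ ∧ a₂ < b₂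

/-- `A` is an outer block of `π`. -/
def IsOuter {m : ℕ} (π : FP m) (A : Finset (Fin m)) : Prop :=
  A ∈ π.parts ∧ ¬ ∃ B ∈ π.parts, StrictlyEmbraces B A

/-- The number `|π|_out` of outer blocks of `π`. -/
noncomputable def numOuter {m : ℕ} (π : FP m) : ℕ :=
  (π.parts.filter fun A => IsOuter π A).card

/-- Reversed refinement order: every block of `ρ` is a union of blocks of `π`. -/
def Refines {m : ℕ} (π ρ : FP m) : Prop :=
  ∀ B ∈ π.parts, ∃ C ∈ ρ.parts, B ⊆ C

/-- The partial order `π ≪ ρ`. -/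
def Ll {m : ℕ} (π ρ : FP m) : Prop :=
  Refines π ρ ∧
    ∀ C ∈ ρ.parts, ∃ B ∈ π.parts, ∃ x y : Fin m,
      IsMinOf x C ∧ IsMaxOf y C ∧ x ∈ B ∧ y ∈ B

/-- The partition `1ₙ` of `{1,…,n+1}` with a single block. -/
noncomputable def fullPart (n : ℕ) : FP (n+1) :=
  Finpartition.indiscrete (by simpa using (Finset.univ_nonempty (α := Fin (n+1))).ne_empty)

/-- `π` is an interval partition. -/
def IsIntervalPartition {m : ℕ} (π : FP m) : Prop :=
  ∀ B ∈ π.parts, ∀ x ∈ B, ∀ z ∈ B, ∀ y : Fin m, x ≤ y → y ≤ z → y ∈ B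

/-- `σ` is the permutation associated to `π` : on each block `{b₁ < ⋯ < b_q}` it is the
cycle `b₁ ↦ b₂ ↦ ⋯ ↦ b_q ↦ b₁`. -/
def IsAssocPerm {m : ℕ} (π : FP m) (σ : Equiv.Perm (Fin m)) : Prop :=
  ∀ B ∈ π.parts, ∀ b ∈ B, σ b ∈ B ∧
    ((b < σ b ∧ ∀ x ∈ B, b < x → σ b ≤ x) ∨ (IsMaxOf b B ∧ IsMinOf (σ b) B))

/-- `κ` is the Kreweras complement of `π`, characterized by `P_κ = P_π⁻¹ ∘ P_{1ₙ}`,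
where `P_{1ₙ}` is the cycle `1 ↦ 2 ↦ ⋯ ↦ n ↦ 1` (i.e. `finRotate`). -/
def IsKrewerasPair {m : ℕ} (π κ : FP m) : Prop :=
  ∃ σπ σκ : Equiv.Perm (Fin m), IsAssocPerm π σπ ∧ IsAssocPerm κ σκ ∧
    σκ = σπ⁻¹ * finRotate m

/-- the element `2a-1` of `{1,…,2n}`, in `Fin (2n)` (0-indexed). -/
def oddEmb {n : ℕ} (a : Fin n) : Fin (2*n) := ⟨2*a.val, by have := a.isLt; omega⟩

/-- the element `2a` of `{1,…,2n}`, in `Fin (2n)` (0-indexed). -/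
def evenEmb {n : ℕ} (a : Fin n) : Fin (2*n) := ⟨2*a.val + 1, by have := a.isLt; omega⟩

/-- `θ = π^(odd) ∪ ρ^(even)` : the blocks of `θ` are the sets `{2a-1 : a ∈ A}` for `A`
a block of `π` and the sets `{2b : b ∈ B}` for `B` a block of `ρ`. -/
def IsOddEvenJoin {n : ℕ} (π ρ : FP n) (θ : FP (2*n)) : Prop :=
  θ.parts = π.parts.image (fun B => B.image oddEmb) ∪
    ρ.parts.image (fun B => B.image evenEmb)

/-- a block consisting of odd elements of `{1,…,2n}` (even 0-indexed values). -/
def OddBlock {m : ℕ} (B : Finset (Fin m)) : Prop := ∀ x ∈ B, x.val % 2 = 0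

/-- a block consisting of even elements of `{1,…,2n}` (odd 0-indexed values). -/
def EvenBlock {m : ℕ} (B : Finset (Fin m)) : Prop := ∀ x ∈ B, x.val % 2 = 1

/-- every block of `θ` is contained in the odds or in the evens. -/
def ParityPreserving {m : ℕ} (θ : FP m) : Prop :=
  ∀ B ∈ θ.parts, OddBlock B ∨ EvenBlock B

def OppositeParity {m : ℕ} (A B : Finset (Fin m)) : Prop :=
  (OddBlock A ∧ EvenBlock B) ∨ (EvenBlock A ∧ OddBlock B)

def SameParity {m : ℕ} (A B : Finset (Fin m)) : Prop :=
  (OddBlock A ∧ OddBlock B) ∨ (EvenBlock A ∧ EvenBlock B)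

/-- `P = Parent_θ(A)` : the unique block `P ≠ A` of `θ` embracing `A` such that every
block `A' ≠ A` of `θ` embracing `A` also embraces `P`. -/
def IsParent {m : ℕ} (θ : FP m) (A P : Finset (Fin m)) : Prop :=
  P ∈ θ.parts ∧ P ≠ A ∧ Embraces P A ∧
    ∀ A' ∈ θ.parts, A' ≠ A → Embraces A' A → Embraces A' P

/-- `θ` has exactly two outer blocks. -/
def ExactlyTwoOuterBlocks {m : ℕ} (θ : FP m) : Prop :=
  ∃ M ∈ θ.parts, ∃ N ∈ θ.parts, M ≠ N ∧ IsOuter θ M ∧ IsOuter θ N ∧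
    ∀ A ∈ θ.parts, IsOuter θ A → A = M ∨ A = N

/-- A series in `ℂ₀⟨⟨z₁,…,z_k⟩⟩`, given by its family of coefficients: `f n w` is the
coefficient of `z_{w 0} z_{w 1} ⋯ z_{w n}` (a word of length `n+1 ≥ 1`). -/
abbrev NCSeries (k : ℕ) := (n : ℕ) → (Fin (n+1) → Fin k) → ℂ

/-- The coefficient `Cf_{w|B}(f)` of the restriction of the word `w` to the set `B`,
listing the elements of `B` in increasing order.  (Equals `1` for `B = ∅`.) -/
noncomputable def partCoeff {k m : ℕ} (f : NCSeries k) (w : Fin (m+1) → Fin k)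
    (B : Finset (Fin (m+1))) : ℂ :=
  if h : B.Nonempty then
    f (B.card - 1) (fun j =>
      w ((B.orderIsoOfFin (Nat.succ_pred_eq_of_pos (Finset.card_pos.mpr h)).symm j).1))
  else 1

/-- The generalized coefficient `Cf_{w;π}(f) = ∏_{B block of π} Cf_{w|B}(f)`. -/
noncomputable def genCoeff {k m : ℕ} (f : NCSeries k) (w : Fin (m+1) → Fin k)
    (π : FP (m+1)) : ℂ :=
  ∏ B ∈ π.parts, partCoeff f w B

/-- Linear functionals on `ℂ⟨X₁,…,X_k⟩`. -/
abbrev Dist (k : ℕ) := FreeAlgebra ℂ (Fin k) →ₗ[ℂ] ℂ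

/-- `μ ∈ D_alg(k)` : `μ` is normalized by `μ(1) = 1`. -/
def IsDalg {k : ℕ} (μ : Dist k) : Prop := μ 1 = 1

/-- The moment series `M_μ`, with `(momentSeries μ) n w = μ (X_{w 0} ⋯ X_{w n})`. -/
noncomputable def momentSeries {k : ℕ} (μ : Dist k) : NCSeries k :=
  fun _ w => μ ((List.ofFn fun j => FreeAlgebra.ι ℂ (w j)).prod)

/-- `f = R_μ` : the moments of `μ` are obtained from `f` by summation over all
non-crossing partitions. -/
def IsRTransform {k : ℕ} (μ : Dist k) (f : NCSeries k) : Prop :=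
  ∀ (n : ℕ) (w : Fin (n+1) → Fin k),
    momentSeries μ n w = ∑ π : FP (n+1), if IsNC π then genCoeff f w π else 0

/-- `g = η_μ` : the moments of `μ` are obtained from `g` by summation over all
interval partitions. -/
def IsEtaSeries {k : ℕ} (μ : Dist k) (g : NCSeries k) : Prop :=
  ∀ (n : ℕ) (w : Fin (n+1) → Fin k),
    momentSeries μ n w = ∑ π : FP (n+1), if IsIntervalPartition π then genCoeff g w π else 0

/-- `μ ∈ D_c(k)` : `μ` is the joint distribution of a `k`-tuple of selfadjoint elements
with respect to a state on a unital C*-algebra. -/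
def IsDc {k : ℕ} (μ : Dist k) : Prop :=
  IsDalg μ ∧
  ∃ (A : Type) (_ : NormedRing A) (_ : StarRing A) (_ : CStarRing A)
    (_ : NormedAlgebra ℂ A) (_ : StarModule ℂ A) (_ : CompleteSpace A)
    (φ : A →ₗ[ℂ] ℂ) (x : Fin k → A),
      φ 1 = 1 ∧ (∀ a : A, 0 ≤ φ (star a * a)) ∧ (∀ i, IsSelfAdjoint (x i)) ∧
      ∀ (n : ℕ) (w : Fin (n+1) → Fin k),
        momentSeries μ n w = φ ((List.ofFn fun j => x (w j)).prod)

/-- convergence in moments. -/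
def ConvInMoments {k : ℕ} (μseq : ℕ → Dist k) (μ : Dist k) : Prop :=
  ∀ P : FreeAlgebra ℂ (Fin k),
    Filter.Tendsto (fun N => μseq N P) Filter.atTop (nhds (μ P))

/-- coefficientwise convergence of series. -/
def ConvCoeffwise {k : ℕ} (fseq : ℕ → NCSeries k) (f : NCSeries k) : Prop :=
  ∀ (n : ℕ) (w : Fin (n+1) → Fin k),
    Filter.Tendsto (fun N => fseq N n w) Filter.atTop (nhds (f n w))

/-- `ν` is the `p`-fold free additive convolution `μ ⊞ ⋯ ⊞ μ`, i.e. `R_ν = p · R_μ`. -/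
def IsNFoldFree {k : ℕ} (p : ℕ) (μ ν : Dist k) : Prop :=
  ∃ f : NCSeries k, IsRTransform μ f ∧ IsRTransform ν (fun n w => (p : ℂ) * f n w)

/-- `ν` is the `p`-fold Boolean convolution `μ ⊎ ⋯ ⊎ μ`, i.e. `η_ν = p · η_μ`. -/
def IsNFoldBool {k : ℕ} (p : ℕ) (μ ν : Dist k) : Prop :=
  ∃ g : NCSeries k, IsEtaSeries μ g ∧ IsEtaSeries ν (fun n w => (p : ℂ) * g n w)

/-- `ν = 𝔹(μ)` : the Boolean Bercovici–Pata bijection, `R_{𝔹(μ)} = η_μ`. -/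
def IsBP {k : ℕ} (μ ν : Dist k) : Prop :=
  ∃ f : NCSeries k, IsEtaSeries μ f ∧ IsRTransform ν f

/-- `μ ∈ D_c(k)` is infinitely divisible with respect to `⊞`. -/
def IsInfDiv {k : ℕ} (μ : Dist k) : Prop :=
  IsDc μ ∧ ∀ N : ℕ, 0 < N → ∃ ν : Dist k, IsDc ν ∧ IsNFoldFree N ν μ

/-- `g = Reta(f)`, i.e. there is `μ ∈ D_alg(k)` with `f = R_μ` and `g = η_μ`. -/
def RetaRel {k : ℕ} (f g : NCSeries k) : Prop :=
  ∃ μ : Dist k, IsDalg μ ∧ IsRTransform μ f ∧ IsEtaSeries μ g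


/-- The Kreweras complement `K(π)`, selected via choice from the defining relation. -/
noncomputable def Krew {m : ℕ} (π : FP m) : FP m :=
  if h : ∃ κ : FP m, IsKrewerasPair π κ then h.choose else π

/-- The transformation `Reta`, given by its explicit combinatorial formula
`Cf_w(Reta f) = Σ_{π ∈ NC(n), π ≪ 1_n} Cf_{w;π}(f)`  (equivalently, `Reta(R_μ) = η_μ`
for every `μ ∈ D_alg(k)`). -/
noncomputable def Reta {k : ℕ} (f : NCSeries k) : NCSeries k :=
  fun n w => ∑ π : FP (n+1),
    if IsNC π ∧ Ll π (fullPart n) then genCoeff f w π else 0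

/-- The boxed convolution `f ⊡ g`, with
`Cf_w(f ⊡ g) = Σ_{π ∈ NC(n)} Cf_{w;π}(f) · Cf_{w;K(π)}(g)`. -/
noncomputable def boxConv {k : ℕ} (f g : NCSeries k) : NCSeries k :=
  fun n w => ∑ π : FP (n+1),
    if IsNC π then genCoeff f w π * genCoeff g w (Krew π) else 0


/-- noncommutative formal power series -/
def Ser (k : ℕ) := List (Fin k) → ℂ

namespace Ser
variable {k : ℕ}

instance : AddCommGroup (Ser k) := inferInstanceAs (AddCommGroup (List (Fin k) → ℂ))

theorem ext' {c d : Ser k} (h : ∀ w, c w = d w) : c = d := funext h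

@[simp] theorem add_app (c d : Ser k) (w) : (c + d) w = c w + d w := rfl
@[simp] theorem sub_app (c d : Ser k) (w) : (c - d) w = c w - d w := rfl
@[simp] theorem neg_app (c : Ser k) (w) : (- c) w = - c w := rfl
@[simp] theorem zero_app (w) : (0 : Ser k) w = 0 := rfl
@[simp] theorem sum_app {ι : Type*} (s : Finset ι) (c : ι → Ser k) (w) :
    (∑ i ∈ s, c i) w = ∑ i ∈ s, c i w := Finset.sum_apply w s c

/-- left derivative -/
def dl (a : Fin k) (c : Ser k) : Ser k := fun w => c (a :: w)
/-- right derivative -/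
def dr (a : Fin k) (c : Ser k) : Ser k := fun w => c (w ++ [a])

/-- Cauchy product -/
def conv : List (Fin k) → Ser k → Ser k → ℂ
  | [], c, d => c [] * d []
  | a :: w, c, d => c [] * d (a :: w) + conv w (dl a c) d

instance : Mul (Ser k) := ⟨fun c d w => conv w c d⟩

@[simp] theorem mul_nil (c d : Ser k) : (c * d) [] = c [] * d [] := rfl
theorem mul_cons (c d : Ser k) (a w) : (c * d) (a :: w) = c [] * d (a :: w) + (dl a c * d) w := rfl

/-- constants -/
def C (x : ℂ) : Ser k := fun w => match w with | [] => x | _ :: _ => 0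
@[simp] theorem C_nil (x : ℂ) : (C x : Ser k) [] = x := rfl
@[simp] theorem C_cons (x : ℂ) (a w) : (C x : Ser k) (a :: w) = 0 := rfl

instance : One (Ser k) := ⟨C 1⟩
theorem one_def : (1 : Ser k) = C 1 := rfl
@[simp] theorem one_nil : (1 : Ser k) [] = 1 := rfl
@[simp] theorem one_cons (a w) : (1 : Ser k) (a :: w) = 0 := rfl

@[simp] theorem dl_add (a : Fin k) (c d : Ser k) : dl a (c + d) = dl a c + dl a d := rfl
@[simp] theorem dl_C (a : Fin k) (x) : dl a (C x : Ser k) = 0 := rfl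
@[simp] theorem dl_one (a : Fin k) : dl a (1 : Ser k) = 0 := rfl
@[simp] theorem dl_zero (a : Fin k) : dl a (0 : Ser k) = 0 := rfl
theorem dl_nil (a : Fin k) (c : Ser k) : dl a c [] = c [a] := rfl

theorem add_mul' (c d e : Ser k) : (c + d) * e = c * e + d * e := by
  refine ext' fun w => ?_
  induction w generalizing c d with
  | nil => simp [add_mul]
  | cons a w ih =>
    have := ih (dl a c) (dl a d)
    simp only [mul_cons, dl_add, add_app, this]; ring

theorem mul_add' (c d e : Ser k) : c * (d + e) = c * d + c * e := by
  refine ext' fun w => ?_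
  induction w generalizing c with
  | nil => simp [mul_add]
  | cons a w ih =>
    have := ih (dl a c)
    simp only [mul_cons, add_app, this]; ring

theorem zero_mul' (c : Ser k) : 0 * c = 0 := by
  refine ext' fun w => ?_
  induction w with
  | nil => simp
  | cons a w ih => simp [mul_cons, ih]

theorem mul_zero' (c : Ser k) : c * 0 = 0 := by
  refine ext' fun w => ?_
  induction w generalizing c with
  | nil => simp
  | cons a w ih => simp [mul_cons, ih]

theorem C_mul (x : ℂ) (c : Ser k) (w) : (C x * c : Ser k) w = x * c w := by
  cases w with
  | nil => simp
  | cons a w => simp [mul_cons, zero_mul']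

theorem mul_C (x : ℂ) (c : Ser k) (w) : (c * C x : Ser k) w = x * c w := by
  induction w generalizing c with
  | nil => simp [mul_comm]
  | cons a w ih => simp [mul_cons, ih]; left; rfl

theorem dl_mul (a : Fin k) (c d : Ser k) : dl a (c * d) = C (c []) * dl a d + dl a c * d := by
  refine ext' fun w => ?_
  rw [add_app, C_mul]; rfl

theorem C_mul_assoc (x : ℂ) (c d : Ser k) : C x * c * d = C x * (c * d) := by
  refine ext' fun w => ?_
  rw [C_mul]
  induction w generalizing c with
  | nil => simp [mul_assoc]
  | cons a w ih =>
    rw [mul_cons, dl_mul, dl_C, zero_mul', add_zero, mul_nil, C_nil, ih, mul_cons]; ring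

theorem mul_assoc' (c d e : Ser k) : c * d * e = c * (d * e) := by
  refine ext' fun w => ?_
  induction w generalizing c with
  | nil => simp [mul_assoc]
  | cons a w ih =>
    rw [mul_cons, dl_mul, add_mul', add_app, ih, C_mul_assoc, C_mul, mul_cons, mul_cons, mul_nil]
    ring

instance : Ring (Ser k) :=
  { (inferInstance : AddCommGroup (Ser k)) with
    mul := (· * ·)
    one := 1
    mul_assoc := mul_assoc'
    one_mul := fun c => ext' fun w => by rw [one_def, C_mul, one_mul]
    mul_one := fun c => ext' fun w => by rw [one_def, mul_C, one_mul]
    left_distrib := mul_add'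
    right_distrib := add_mul'
    zero_mul := zero_mul'
    mul_zero := mul_zero' }

theorem C_comm (x : ℂ) (c : Ser k) : C x * c = c * C x := by
  refine ext' fun w => ?_
  rw [C_mul, mul_C]

/-- the letter `z_i` -/
def z (i : Fin k) : Ser k := fun w => if w = [i] then 1 else 0
@[simp] theorem z_nil (i : Fin k) : z i [] = 0 := by simp [z]
theorem dl_z (a i : Fin k) : dl a (z i) = if a = i then 1 else 0 := by
  refine ext' fun w => ?_
  cases w <;> by_cases h : a = i <;> simp [dl, z, h]

theorem z_mul_cons (i : Fin k) (c : Ser k) (a w) : (z i * c) (a :: w) = if a = i then c w else 0 := by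
  rw [mul_cons, dl_z]; by_cases h : a = i <;> simp [h]

theorem dr_mul (a : Fin k) (c d : Ser k) (hd : d [] = 0) : dr a (c * d) = c * dr a d := by
  refine ext' fun w => ?_
  induction w generalizing c with
  | nil => simp [dr, mul_cons, hd]
  | cons b w ih =>
    have := ih (dl b c)
    simp only [dr, List.cons_append, mul_cons] at this ⊢
    rw [this]

theorem dr_z (a i : Fin k) : dr a (z i) = if a = i then 1 else 0 := by
  refine ext' fun w => ?_
  cases w <;> by_cases h : a = i <;> simp [dr, z, h]

@[simp] theorem dr_add (a : Fin k) (c d : Ser k) : dr a (c + d) = dr a c + dr a d := rfl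
@[simp] theorem dr_C (a : Fin k) (x) : dr a (C x : Ser k) = 0 := by
  refine ext' fun w => ?_
  cases w <;> simp [dr]
@[simp] theorem dr_zero (a : Fin k) : dr a (0 : Ser k) = 0 := rfl
theorem dr_sum {ι : Type*} (s : Finset ι) (a : Fin k) (c : ι → Ser k) :
    dr a (∑ i ∈ s, c i) = ∑ i ∈ s, dr a (c i) := by
  refine ext' fun w => ?_
  simp [dr]
theorem dl_sum {ι : Type*} (s : Finset ι) (a : Fin k) (c : ι → Ser k) :
    dl a (∑ i ∈ s, c i) = ∑ i ∈ s, dl a (c i) := by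
  refine ext' fun w => ?_
  simp [dl]
theorem dl_dr (a b : Fin k) (c : Ser k) : dl a (dr b c) = dr b (dl a c) := rfl

theorem eq_dl (c : Ser k) : c = C (c []) + ∑ i, z i * dl i c := by
  refine ext' fun w => ?_
  cases w with
  | nil => simp
  | cons a w => simp [z_mul_cons, dl]

theorem mul_z_append (i : Fin k) (c : Ser k) (a w) :
    (c * z i) (w ++ [a]) = if a = i then c w else 0 := by
  have := congrFun (dr_mul a c (z i) (by simp)) w
  rw [dr_z] at this
  rw [show (c * z i) (w ++ [a]) = dr a (c * z i) w from rfl, this]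
  by_cases h : a = i <;> simp [h]

theorem eq_dr (c : Ser k) : c = C (c []) + ∑ i, dr i c * z i := by
  refine ext' fun w => ?_
  rcases List.eq_nil_or_concat w with rfl | ⟨w, a, rfl⟩
  · simp
  · have : (C (c []) : Ser k) (w ++ [a]) = 0 := congrFun (dr_C a (c [])) w
    simp [mul_z_append, dr, this]

/-- agreement on short words -/
def Ag (n : ℕ) (c d : Ser k) : Prop := ∀ w, w.length < n → c w = d w

theorem Ag.refl (n) (c : Ser k) : Ag n c c := fun _ _ => rfl
theorem Ag.symm {n} {c d : Ser k} (h : Ag n c d) : Ag n d c := fun w hw => (h w hw).symm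
theorem Ag.trans {n} {c d e : Ser k} (h : Ag n c d) (h' : Ag n d e) : Ag n c e :=
  fun w hw => (h w hw).trans (h' w hw)
theorem Ag.mono {n m} (hm : m ≤ n) {c d : Ser k} (h : Ag n c d) : Ag m c d :=
  fun w hw => h w (by omega)
theorem Ag.plus {n} {c d c' d' : Ser k} (h : Ag n c d) (h' : Ag n c' d') : Ag n (c + c') (d + d') :=
  fun w hw => by simp [h w hw, h' w hw]
theorem Ag.sum {ι : Type*} {s : Finset ι} {n} {c d : ι → Ser k} (h : ∀ i, Ag n (c i) (d i)) :
    Ag n (∑ i ∈ s, c i) (∑ i ∈ s, d i) :=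
  fun w hw => by simp [h _ w hw]
theorem Ag.mul {n} {c d c' d' : Ser k} (h : Ag n c c') (h' : Ag n d d') : Ag n (c * d) (c' * d') := by
  intro w hw
  induction w generalizing c c' n with
  | nil => simp [h [] hw, h' [] hw]
  | cons a w ih =>
    obtain ⟨n, rfl⟩ : ∃ m, n = m + 1 := ⟨n - 1, by simp at hw; omega⟩
    rw [mul_cons, mul_cons, h [] (by simp), h' _ hw,
      ih (n := n) (c := dl a c) (c' := dl a c') (fun v hv => h _ (by simpa using hv))
        (h'.mono (by omega)) (by simpa using hw)]
theorem Ag.mulL {n} {c d c' d' : Ser k} (hc : c [] = 0) (h : Ag (n+1) c c') (h' : Ag n d d') :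
    Ag (n+1) (c * d) (c' * d') := by
  intro w hw
  have hc' : c' [] = 0 := by rw [← hc]; exact (h [] (by simp)).symm
  cases w with
  | nil => simp [hc, hc']
  | cons a w =>
    rw [mul_cons, mul_cons, hc, hc', Ag.mul (n := n) (c := dl a c) (c' := dl a c')
      (fun v hv => h _ (by simpa using hv)) h' w (by simpa using hw)]
    simp
theorem Ag.mul_z {n} {c c' : Ser k} (i) (h : Ag n c c') : Ag (n+1) (c * z i) (c' * z i) := by
  intro w hw
  rcases List.eq_nil_or_concat w with rfl | ⟨w, a, rfl⟩
  · simp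
  · simp only [List.concat_eq_append, List.length_append, List.length_singleton] at hw ⊢
    rw [mul_z_append, mul_z_append, h w (by omega)]
theorem Ag.eq {c d : Ser k} (h : ∀ n, Ag n c d) : c = d :=
  ext' fun w => h (w.length + 1) w (by omega)

/-- contraction -/
def Contr {ι : Type*} (T : (ι → Ser k) → ι → Ser k) : Prop :=
  ∀ n x y, (∀ i, Ag n (x i) (y i)) → ∀ i, Ag (n+1) (T x i) (T y i)

theorem Contr.unique {ι : Type*} {T : (ι → Ser k) → ι → Ser k} (hT : Contr T) {x y}
    (hx : T x = x) (hy : T y = y) : x = y := by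
  have : ∀ n i, Ag n (x i) (y i) := by
    intro n
    induction n with
    | zero => intro i w hw; omega
    | succ n ih => rw [← hx, ← hy]; exact hT n x y ih
  funext i
  exact Ag.eq fun n => this n i

theorem Contr.exists {ι : Type*} {T : (ι → Ser k) → ι → Ser k} (hT : Contr T) :
    ∃ x, T x = x := by
  let s : ℕ → ι → Ser k := fun n => T^[n] 0
  have hs : ∀ n, s (n+1) = T (s n) := fun n => Function.iterate_succ_apply' T n 0
  have h1 : ∀ n m i, Ag n (s n i) (s (n + m) i) := by
    intro n
    induction n with
    | zero => intro m i w hw; omega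
    | succ n ih =>
      intro m
      rw [hs, show n + 1 + m = (n + m) + 1 by omega, hs]
      exact hT n _ _ (ih m)
  let x : ι → Ser k := fun i w => s (w.length + 1) i w
  have hx : ∀ n i, Ag n (x i) (s n i) := by
    intro n i w hw
    have := h1 (w.length + 1) (n - (w.length + 1)) i w (by omega)
    rw [show w.length + 1 + (n - (w.length + 1)) = n by omega] at this
    exact this
  refine ⟨x, funext fun i => Ag.eq fun n => ?_⟩
  have a := hT n x (s n) (hx n) i
  rw [← hs] at a
  exact (a.trans (hx (n+1) i).symm).mono (by omega)

/-- remove the constant term -/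
def nc (c : Ser k) : Ser k := fun w => match w with | [] => 0 | a :: w => c (a :: w)
@[simp] theorem nc_nil (c : Ser k) : nc c [] = 0 := rfl
theorem nc_eq {c : Ser k} (h : c [] = 0) : nc c = c := by
  refine ext' fun w => ?_
  cases w <;> simp [nc, h]
theorem Ag.nc {n} {c d : Ser k} (h : Ag n c d) : Ag n (nc c) (nc d) := by
  intro w hw
  cases w with
  | nil => rfl
  | cons a w => exact h _ hw

/-- substitution operator -/
def phiT (A : Fin k → Ser k) (Φ : Ser k → Ser k) (f : Ser k) : Ser k :=
  C (f []) + ∑ i, nc (A i) * Φ (dl i f)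

theorem phiT_contr (A : Fin k → Ser k) : Contr (phiT A) := by
  intro n x y h f
  exact Ag.plus (Ag.refl _ _) (Ag.sum fun i => Ag.mulL rfl (Ag.refl _ _) (h _))

/-- substitution -/
noncomputable def phi (A : Fin k → Ser k) : Ser k → Ser k := (phiT_contr A).exists.choose

theorem phi_eq' (A : Fin k → Ser k) (f) :
    phi A f = C (f []) + ∑ i, nc (A i) * phi A (dl i f) :=
  (congrFun (phiT_contr A).exists.choose_spec f).symm

theorem phi_eq {A : Fin k → Ser k} (hA : ∀ i, A i [] = 0) (f) :
    phi A f = C (f []) + ∑ i, A i * phi A (dl i f) := by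
  rw [phi_eq']; simp only [nc_eq (hA _)]

theorem phi_unique {A : Fin k → Ser k} (hA : ∀ i, A i [] = 0) (Φ : Ser k → Ser k)
    (h : ∀ f, Φ f = C (f []) + ∑ i, A i * Φ (dl i f)) : Φ = phi A := by
  refine (phiT_contr A).unique ?_ (phiT_contr A).exists.choose_spec
  funext f
  rw [h]; simp only [phiT, nc_eq (hA _)]

@[simp] theorem phi_nil (A : Fin k → Ser k) (f) : phi A f [] = f [] := by
  rw [phi_eq']; simp

theorem phi_Ag {n} {A A' : Fin k → Ser k} (h : ∀ i, Ag n (A i) (A' i)) (f) :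
    Ag n (phi A f) (phi A' f) := by
  suffices ∀ m ≤ n, ∀ f, Ag m (phi A f) (phi A' f) from this n le_rfl f
  intro m
  induction m with
  | zero => intro _ _ w hw; omega
  | succ m ih =>
    intro hm f
    rw [phi_eq', phi_eq']
    exact Ag.plus (Ag.refl _ _) (Ag.sum fun i => Ag.mulL rfl ((h i).nc.mono hm) (ih (by omega) _))

@[simp] theorem phi_C (A : Fin k → Ser k) (x) : phi A (C x) = C x := by
  have h0 : phi A 0 = 0 := by
    suffices ∀ n, Ag n (phi A 0) 0 from Ag.eq this
    intro n
    induction n with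
    | zero => intro w hw; omega
    | succ n ih =>
      rw [phi_eq']
      have : (0 : Ser k) = C 0 + ∑ i, nc (A i) * 0 := by
        refine ext' fun w => ?_
        cases w <;> simp
      conv_rhs => rw [this]
      exact Ag.plus (Ag.refl _ _) (Ag.sum fun i => Ag.mulL rfl (Ag.refl _ _) ih)
  rw [phi_eq']; simp [h0]

theorem C_add (x y : ℂ) : (C (x + y) : Ser k) = C x + C y := by
  refine ext' fun w => ?_
  cases w <;> simp
theorem C_mul_C (x y : ℂ) : (C (x * y) : Ser k) = C x * C y := by
  refine ext' fun w => ?_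
  rw [C_mul]
  cases w <;> simp

theorem phi_zero (A : Fin k → Ser k) : phi A 0 = 0 := by
  have h : (0 : Ser k) = C 0 := by
    refine ext' fun w => ?_
    cases w <;> simp
  rw [h, phi_C]

@[simp] theorem phi_one (A : Fin k → Ser k) : phi A 1 = 1 := phi_C A 1

theorem phi_add (A : Fin k → Ser k) (f g) : phi A (f + g) = phi A f + phi A g := by
  suffices ∀ n f g, Ag n (phi A (f + g)) (phi A f + phi A g) from Ag.eq fun n => this n f g
  intro n
  induction n with
  | zero => intro f g w hw; omega
  | succ n ih =>
    intro f g
    rw [phi_eq' A (f + g)]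
    have e : phi A f + phi A g =
      C ((f + g) []) + ∑ i, nc (A i) * (phi A (dl i f) + phi A (dl i g)) := by
      rw [phi_eq' A f, phi_eq' A g, add_app, C_add]
      simp only [mul_add, Finset.sum_add_distrib]; abel
    rw [e]
    exact Ag.plus (Ag.refl _ _) (Ag.sum fun i => Ag.mulL rfl (Ag.refl _ _) (ih _ _))

theorem phi_sum {ι : Type*} (s : Finset ι) (A : Fin k → Ser k) (c : ι → Ser k) :
    phi A (∑ i ∈ s, c i) = ∑ i ∈ s, phi A (c i) := by
  classical
  induction s using Finset.induction_on with
  | empty => simp [phi_zero]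
  | insert a s ha ih => rw [Finset.sum_insert ha, Finset.sum_insert ha, phi_add, ih]

theorem phi_Cmul (A : Fin k → Ser k) (x : ℂ) (f) : phi A (C x * f) = C x * phi A f := by
  suffices ∀ n f, Ag n (phi A (C x * f)) (C x * phi A f) from Ag.eq fun n => this n f
  intro n
  induction n with
  | zero => intro f w hw; omega
  | succ n ih =>
    intro f
    rw [phi_eq' A (C x * f)]
    have e : C x * phi A f =
      C ((C x * f : Ser k) []) + ∑ i, nc (A i) * (C x * phi A (dl i f)) := by
      rw [phi_eq' A f, mul_nil, C_nil, C_mul_C, mul_add, Finset.mul_sum]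
      congr 1
      refine Finset.sum_congr rfl fun i _ => ?_
      rw [← mul_assoc, C_comm, mul_assoc]
    rw [e]
    refine Ag.plus (Ag.refl _ _) (Ag.sum fun i => Ag.mulL rfl (Ag.refl _ _) ?_)
    have := ih (dl i f)
    rw [dl_mul]; simpa using this

theorem phi_mul (A : Fin k → Ser k) (f g) : phi A (f * g) = phi A f * phi A g := by
  suffices ∀ n f g, Ag n (phi A (f * g)) (phi A f * phi A g) from Ag.eq fun n => this n f g
  intro n
  induction n with
  | zero => intro f g w hw; omega
  | succ n ih =>
    intro f g
    rw [phi_eq' A (f * g)]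
    have e : phi A f * phi A g =
      C ((f * g) []) + ∑ i, nc (A i) * (C (f []) * phi A (dl i g) + phi A (dl i f) * phi A g) := by
      have e1 : phi A f * phi A g = C (f []) * (C (g []) + ∑ i, nc (A i) * phi A (dl i g)) +
          (∑ i, nc (A i) * phi A (dl i f)) * phi A g := by
        rw [← phi_eq' A g, ← add_mul, ← phi_eq' A f]
      rw [e1, mul_nil, C_mul_C, mul_add, Finset.mul_sum, add_assoc, Finset.sum_mul,
        ← Finset.sum_add_distrib]
      congr 1
      refine Finset.sum_congr rfl fun i _ => ?_
      rw [mul_add, mul_assoc (nc (A i)), ← mul_assoc (C _), C_comm, mul_assoc]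
    rw [e]
    refine Ag.plus (Ag.refl _ _) (Ag.sum fun i => Ag.mulL rfl (Ag.refl _ _) ?_)
    rw [dl_mul, phi_add, phi_Cmul]
    exact Ag.plus (Ag.refl _ _) (ih _ _)

theorem phi_z {A : Fin k → Ser k} (hA : ∀ i, A i [] = 0) (i) : phi A (z i) = A i := by
  rw [phi_eq hA]
  have : (C 0 : Ser k) = 0 := by rw [← phi_zero (k := k) (fun _ => 0), phi_eq']; simp [phi_zero]
  simp [this, dl_z, apply_ite (phi A), phi_zero]

theorem phi_dr {A : Fin k → Ser k} (hA : ∀ i, A i [] = 0) (f) :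
    phi A f = C (f []) + ∑ i, phi A (dr i f) * A i := by
  conv_lhs => rw [eq_dr f, phi_add, phi_sum, phi_C]
  simp only [phi_mul, phi_z hA]

theorem phi_phi {A B : Fin k → Ser k} (hA : ∀ i, A i [] = 0) (hB : ∀ i, B i [] = 0) (f) :
    phi A (phi B f) = phi (fun i => phi A (B i)) f := by
  refine congrFun (phi_unique (Φ := fun f => phi A (phi B f)) (by simp [hB]) fun f => ?_) f
  show phi A (phi B f) = _
  rw [phi_eq hB, phi_add, phi_sum, phi_C]
  simp only [phi_mul]

theorem phi_conj {A : Fin k → Ser k} (hA : ∀ i, A i [] = 0) {u v : Ser k} (h : u * v = 1)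
    (h' : v * u = 1) (f) : u * phi A f * v = phi (fun i => u * A i * v) f := by
  refine congrFun (phi_unique (Φ := fun f => u * phi A f * v) (by simp [hA]) fun f => ?_) f
  show u * phi A f * v = _
  rw [phi_eq hA, mul_add, add_mul, ← C_comm, mul_assoc, h, mul_one, Finset.mul_sum, Finset.sum_mul]
  congr 1
  refine Finset.sum_congr rfl fun i _ => ?_
  calc u * (A i * phi A (dl i f)) * v = u * A i * 1 * phi A (dl i f) * v := by
        simp only [mul_assoc, one_mul]
    _ = _ := by rw [← h']; simp only [mul_assoc]

theorem exists_inv {F : Ser k} (hF : F [] = 0) : ∃ M : Ser k, (1 - F) * M = 1 ∧ M * (1 - F) = 1 := by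
  have c1 : Contr (k := k) (ι := Unit) (fun x i => 1 + F * x i) := fun n x y h i =>
    Ag.plus (Ag.refl _ _) (Ag.mulL hF (Ag.refl _ _) (h i))
  obtain ⟨x, hx⟩ := c1.exists
  have hx : (1 - F) * x () = 1 := by
    have := congrFun hx ()
    rw [sub_mul, one_mul]; nth_rewrite 1 [← this]; simp
  have c2 : Contr (k := k) (ι := Unit) (fun x i => F * x i) := fun n x y h i =>
    (Ag.mulL hF (Ag.refl _ _) (h i))
  refine ⟨x (), hx, ?_⟩
  have := c2.unique (x := fun _ => x () * (1 - F) - 1) (y := 0) ?_ ?_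
  · have := congrFun this ()
    simpa [sub_eq_zero] using this
  · funext i
    have : (1 - F) * (x () * (1 - F) - 1) = 0 := by
      rw [mul_sub, ← mul_assoc, hx]; simp
    rw [sub_mul, one_mul, sub_eq_zero] at this
    exact this.symm
  · funext i; simp

end Ser

namespace Ser
variable {k : ℕ}

/-- the system of equations governing the boxed convolution -/
def HL (f g : Ser k) (H L : Fin k → Ser k) : Prop :=
  (∀ i, H i = z i * phi L (dl i g)) ∧ (∀ i, L i = phi H (dr i f) * z i)

/-- the operator of the system -/
noncomputable def HLT (f g : Ser k) (Z : Fin k → Ser k) (x : Bool × Fin k → Ser k) :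
    Bool × Fin k → Ser k
  | (true, i) => Z i * phi (fun j => x (false, j)) (dl i g)
  | (false, i) => phi (fun j => x (true, j)) (dr i f) * Z i

theorem HLT_contr (f g : Ser k) (N : Ser k) : Contr (HLT f g (fun i => z i * N)) := by
  rintro n x y h ⟨_ | _, i⟩
  · simp only [HLT, ← mul_assoc]
    exact Ag.mul (Ag.mul_z _ (phi_Ag (fun j => h _) _)) (Ag.refl _ _)
  · simp only [HLT]
    exact Ag.mulL (by simp) (Ag.refl _ _) (phi_Ag (fun j => h _) _)

theorem HL.exists (f g : Ser k) : ∃ H L, HL f g H L := by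
  obtain ⟨x, hx⟩ := (HLT_contr f g 1).exists
  refine ⟨fun i => x (true, i), fun i => x (false, i), fun i => ?_, fun i => ?_⟩
  · have := congrFun hx (true, i)
    simp only [HLT, mul_one] at this
    exact this.symm
  · have := congrFun hx (false, i)
    simp only [HLT, mul_one] at this
    exact this.symm

theorem HL.H_nil {f g : Ser k} {H L} (h : HL f g H L) (i) : H i [] = 0 := by
  rw [h.1]; simp
theorem HL.L_nil {f g : Ser k} {H L} (h : HL f g H L) (i) : L i [] = 0 := by
  rw [h.2]; simp

/-- the series with all coefficients 1 -/
def ones : Ser k := fun _ => 1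

theorem HL.ones {f : Ser k} {H L} (h : HL f ones H L) {F} (hF : F = ∑ i, L i) :
    ∃ M, (1 - F) * M = 1 ∧ M * (1 - F) = 1 ∧ (∀ i, H i = z i * M) ∧
      F = ∑ i, phi (fun i => z i * M) (dr i f) * z i ∧ F [] = 0 := by
  have hF0 : F [] = 0 := by rw [hF]; simp [h.L_nil]
  obtain ⟨M, h1, h2⟩ := exists_inv hF0
  have e : phi L Ser.ones = 1 + F * phi L Ser.ones := by
    have : phi L Ser.ones = C (Ser.ones []) + ∑ i, L i * phi L (dl i Ser.ones) :=
      phi_eq h.L_nil _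
    rw [hF, Finset.sum_mul]
    exact this
  have e2 : phi L Ser.ones = M := by
    have : (1 - F) * phi L Ser.ones = 1 := by
      rw [sub_mul, one_mul]; nth_rewrite 1 [e]; simp
    calc phi L Ser.ones = M * ((1 - F) * phi L Ser.ones) := by rw [← mul_assoc, h2, one_mul]
      _ = M := by rw [this, mul_one]
  have hH : H = fun i => z i * M := by
    funext i
    rw [h.1]
    rw [← e2]; rfl
  refine ⟨M, h1, h2, fun i => congrFun hH i, ?_, hF0⟩
  conv_lhs => rw [hF]
  rw [← hH]
  exact Finset.sum_congr rfl fun i _ => h.2 i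

theorem dr_lincomb (c : Fin k → Ser k) (i) : dr i (∑ j, c j * z j) = c i := by
  rw [dr_sum]; simp [dr_mul, dr_z]

theorem dl_lincomb (c : Fin k → Ser k) (i) : dl i (∑ j, z j * c j) = c i := by
  rw [dl_sum]; refine ext' fun w => ?_
  simp [dl, z_mul_cons]

theorem C_zero : (C 0 : Ser k) = 0 := by
  refine ext' fun w => ?_
  cases w <;> simp

theorem main_alg {f g p F G P R : Ser k} {H1 L1 H2 L2 H L H' L' Hr Lr : Fin k → Ser k}
    (hf : f [] = 0) (hg : g [] = 0)
    (hF : HL f ones H1 L1) (eF : F = ∑ i, L1 i)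
    (hG : HL g ones H2 L2) (eG : G = ∑ i, L2 i)
    (hp : HL f g H L) (ep : p = phi H f)
    (hP : HL F G H' L') (eP : P = phi H' F)
    (hR : HL p ones Hr Lr) (eR : R = ∑ i, Lr i) : R = P := by
  obtain ⟨MF, mF1, mF2, -, F1, F0⟩ := hF.ones eF
  obtain ⟨MG, mG1, mG2, -, G1, G0⟩ := hG.ones eG
  have zn : ∀ (M : Ser k) i, (z i * M : Ser k) [] = 0 := by intro M i; simp
  have nz : ∀ (M : Ser k) i, (M * z i : Ser k) [] = 0 := by intro M i; simp
  -- derivatives of F, G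
  have drF : ∀ i, dr i F = phi (fun i => z i * MF) (dr i f) := by
    intro i; rw [F1]; simp only [dr_lincomb]
  have fF : phi (fun i => z i * MF) f = F * MF := by
    rw [phi_dr (zn MF), hf, C_zero, zero_add]
    conv_rhs => rw [F1]
    rw [Finset.sum_mul]; simp only [mul_assoc]
  have gG : phi (fun i => z i * MG) g = G * MG := by
    rw [phi_dr (zn MG), hg, C_zero, zero_add]
    conv_rhs => rw [G1]
    rw [Finset.sum_mul]; simp only [mul_assoc]
  have gG' : phi (fun i => MG * z i) g = MG * G := by
    have := phi_conj (zn MG) mG2 mG1 g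
    rw [gG] at this
    simp only [mul_assoc, mG2, mul_one] at this
    exact this.symm
  have G2 : G = ∑ i, z i * phi (fun i => MG * z i) (dl i g) := by
    rw [phi_eq (nz MG), hg, C_zero, zero_add] at gG'
    have := congrArg (fun t => (1 - G) * t) gG'
    simp only [← mul_assoc, mG1, one_mul, Finset.mul_sum] at this
    exact this.symm
  have dlG : ∀ i, dl i G = phi (fun i => MG * z i) (dl i g) := by
    intro i; rw [G2]; simp only [dl_lincomb]
  have P0 : P [] = 0 := by rw [eP]; simp [F0]
  have eP' : P = phi L' G := by
    rw [eP, phi_dr hP.H_nil, phi_eq hP.L_nil, F0, G0]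
    congr 1
    refine Finset.sum_congr rfl fun i _ => ?_
    rw [hP.1 i, ← mul_assoc, ← hP.2 i]
  obtain ⟨N, n1, n2⟩ := exists_inv P0
  have inv_unique : ∀ X : Ser k, (1 - P) * X = 1 → X = N := by
    intro X hX
    calc X = N * ((1 - P) * X) := by rw [← mul_assoc, n2, one_mul]
      _ = N := by rw [hX, mul_one]
  have phi_sub : ∀ A : Fin k → Ser k, ∀ X, phi A (1 - X) = 1 - phi A X := by
    intro A X
    have := phi_add A (1 - X) X
    rw [sub_add_cancel, phi_one] at this
    exact eq_sub_of_add_eq this.symm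
  have NF : phi H' MF = N := by
    apply inv_unique
    rw [eP, ← phi_sub, ← phi_mul, mF1, phi_one]
  have NG : phi L' MG = N := by
    apply inv_unique
    rw [eP', ← phi_sub, ← phi_mul, mG1, phi_one]
  have cH : ∀ u, phi H' (phi (fun i => z i * MF) u) = phi (fun i => H' i * N) u := by
    intro u
    rw [phi_phi hP.H_nil (zn MF)]
    simp only [phi_mul, phi_z hP.H_nil, NF]
  have cL : ∀ u, phi L' (phi (fun i => MG * z i) u) = phi (fun i => N * L' i) u := by
    intro u
    rw [phi_phi hP.L_nil (nz MG)]
    simp only [phi_mul, phi_z hP.L_nil, NG]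
  -- two solutions of the same system
  have key := (HLT_contr f g N).unique
    (x := fun b => if b.1 then H' b.2 * N else L' b.2 * N)
    (y := fun b => if b.1 then phi (fun i => z i * N) (H b.2) else phi (fun i => z i * N) (L b.2))
    (by
      funext ⟨b, i⟩
      cases b
      · simp only [HLT, if_true, Bool.false_eq_true, if_false]
        rw [hP.2 i, drF, cH, mul_assoc]
      · simp only [HLT, if_true, Bool.false_eq_true, if_false]
        rw [hP.1 i, dlG, cL, mul_assoc, mul_assoc]
        congr 1
        have := phi_conj (A := fun i => L' i * N) (u := N) (v := 1 - P)
          (by intro i; simp [hP.L_nil]) n2 n1 (dl i g)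
        simp only [mul_assoc, n2, mul_one] at this
        rw [← this, mul_assoc, mul_assoc, n1, mul_one])
    (by
      funext ⟨b, i⟩
      cases b
      · simp only [HLT, if_true, Bool.false_eq_true, if_false]
        conv_rhs => rw [hp.2 i]
        rw [phi_mul, phi_phi (zn N) hp.H_nil, phi_z (zn N)]
      · simp only [HLT, if_true, Bool.false_eq_true, if_false]
        conv_rhs => rw [hp.1 i]
        rw [phi_mul, phi_phi (zn N) hp.L_nil, phi_z (zn N)])
  have keyH : ∀ i, phi (fun i => z i * N) (H i) = H' i * N := by
    intro i
    have := congrFun key (true, i)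
    simpa using this.symm
  have p0 : p [] = 0 := by rw [ep]; simp [hf]
  have pZ : phi (fun i => z i * N) p = P * N := by
    rw [ep, phi_phi (zn N) hp.H_nil]
    simp only [keyH]
    rw [← cH, fF, phi_mul, ← eP, NF]
  have eqP : P = ∑ i, phi (fun i => z i * N) (dr i p) * z i := by
    rw [phi_dr (zn N), p0, C_zero, zero_add] at pZ
    have := congrArg (fun t => t * (1 - P)) pZ
    simp only [mul_assoc, n2, mul_one, Finset.sum_mul] at this
    exact this.symm
  obtain ⟨MR, mR1, mR2, -, R1, R0⟩ := hR.ones eR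
  -- uniqueness for the Reta equation
  have c : ∀ n, Ag n R P := by
    intro n
    induction n with
    | zero => intro w hw; omega
    | succ n ih =>
      have hMN : Ag n MR N := by
        have e1 : MR = 1 + MR * R := by
          rw [mul_sub, mul_one, sub_eq_iff_eq_add] at mR2; exact mR2
        have : MR - N = MR * (R - P) * N := by
          calc MR - N = MR * ((1 - P) * N) - MR * (1 - R) * N := by rw [n1, mR2]; simp
            _ = _ := by noncomm_ring
        have hz : Ag n (R - P) 0 := fun w hw => by simp [ih w hw]
        have h2 := Ag.mul (Ag.mul (Ag.refl n MR) hz) (Ag.refl n N)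
        rw [← this] at h2
        intro w hw
        have := h2 w hw
        simpa [sub_eq_zero] using this
      rw [R1, eqP]
      exact Ag.sum fun i => Ag.mul_z _ (phi_Ag (fun j => Ag.mul (Ag.refl _ _) hMN) _)
  exact Ag.eq c

end Ser

/-- complete alternating non-crossing relation on `[a,b]` connecting `a` and `b` -/
structure GR (a b : ℕ) (R : ℕ → ℕ → Prop) : Prop where
  sub : ∀ x y, R x y → a ≤ x ∧ x ≤ b
  rfl' : ∀ x, a ≤ x → x ≤ b → R x x
  symm : ∀ x y, R x y → R y x
  trans : ∀ x y z, R x y → R y z → R x z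
  par : ∀ x y, R x y → x % 2 = y % 2
  comp : ∀ x y, a ≤ x → x < y → y ≤ b → x % 2 = y % 2 →
    (R x y ↔ ∀ u v, x < u → u < y → u % 2 ≠ x % 2 → R u v → x < v ∧ v < y)
  ab : R a b

namespace GR
variable {a b j : ℕ} {R S T : ℕ → ℕ → Prop}

theorem sub' (h : GR a b R) {x y} (hxy : R x y) : a ≤ x ∧ x ≤ b ∧ a ≤ y ∧ y ≤ b := by
  have := h.sub _ _ hxy
  have := h.sub _ _ (h.symm _ _ hxy)
  omega

theorem opp (h : GR a b R) {x y u v} (hxy : R x y) (huv : R u v) (h1 : x < u) (h2 : u < y)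
    (hp : u % 2 ≠ x % 2) : x < v ∧ v < y := by
  have hx := h.sub' hxy
  exact (h.comp x y hx.1 (by omega) hx.2.2.2 (h.par _ _ hxy)).1 hxy u v h1 h2 hp huv

theorem nc (h : GR a b R) {x u y v} (hxy : R x y) (huv : R u v) (h1 : x < u) (h2 : u < y)
    (h3 : y < v) : R x u := by
  have hx := h.sub' hxy
  have hp := h.par _ _ hxy
  have hq := h.par _ _ huv
  by_cases hpar : u % 2 = x % 2
  · refine (h.comp x u hx.1 h1 (by omega) hpar.symm).2 fun s t hs1 hs2 hs3 hst => ?_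
    have k1 := h.opp hxy hst hs1 (by omega) hs3
    have k2 := h.par _ _ hst
    by_contra hcon
    have : t ≠ u := by omega
    have k3 := h.opp huv (h.symm _ _ hst) (by omega) (by omega) (by omega)
    omega
  · have := h.opp hxy huv h1 h2 hpar
    omega

theorem interior (h : GR a b R) (hj : R a j) (hn : ∀ y, R a y → a < y → j ≤ y)
    {u v} (huv : R u v) (h1 : a < u) (h2 : u < j) : a < v ∧ v < j := by
  have hq := h.sub' huv
  by_cases hpar : u % 2 = a % 2
  · by_contra hcon
    have h3 : ¬ R a u := fun h' => by have := hn _ h' h1; omega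
    rcases lt_trichotomy v a with hv | hv | hv
    · omega
    · subst hv; exact h3 (h.symm _ _ huv)
    · rcases eq_or_lt_of_le (show j ≤ v by omega) with hv | hv
      · subst hv; exact h3 (h.trans _ _ _ hj (h.symm _ _ huv))
      · exact h3 (h.nc hj huv h1 h2 hv)
  · exact h.opp hj huv h1 h2 hpar

/-- gluing -/
def glue (a j : ℕ) (S T : ℕ → ℕ → Prop) (x y : ℕ) : Prop :=
  S x y ∨ T x y ∨ (x = a ∧ y = a) ∨ (x = a ∧ T j y) ∨ (T j x ∧ y = a)

theorem glue_good (haj : a < j) (hjb : j ≤ b) (hp : j % 2 = a % 2)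
    (hS : GR (a+1) (j-1) S) (hT : GR j b T) : GR a b (glue a j S T) := by
  have s1 : ∀ x y, S x y → a < x ∧ x < j ∧ a < y ∧ y < j := fun x y h => by
    have := hS.sub' h; omega
  have t1 : ∀ x y, T x y → j ≤ x ∧ x ≤ b ∧ j ≤ y ∧ y ≤ b := fun x y h => hT.sub' h
  have tj : T j j := hT.rfl' j le_rfl hjb
  refine ⟨?_, ?_, ?_, ?_, ?_, ?_, ?_⟩
  · rintro x y (h | h | ⟨rfl, rfl⟩ | ⟨rfl, h⟩ | ⟨h, rfl⟩)
    · have := s1 _ _ h; omega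
    · have := t1 _ _ h; omega
    · omega
    · omega
    · have := t1 _ _ h; omega
  · intro x h1 h2
    by_cases hx : x = a
    · right; right; left; exact ⟨hx, hx⟩
    · by_cases hxj : x < j
      · left; exact hS.rfl' x (by omega) (by omega)
      · right; left; exact hT.rfl' x (by omega) h2
  · rintro x y (h | h | ⟨rfl, rfl⟩ | ⟨rfl, h⟩ | ⟨h, rfl⟩)
    · left; exact hS.symm _ _ h
    · right; left; exact hT.symm _ _ h
    · right; right; left; exact ⟨rfl, rfl⟩
    · right; right; right; right; exact ⟨h, rfl⟩
    · right; right; right; left; exact ⟨rfl, h⟩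
  · have sy := hT.symm
    have tr := hT.trans
    rintro x y z (h | h | ⟨rfl, rfl⟩ | ⟨rfl, h⟩ | ⟨h, rfl⟩)
      (h' | h' | ⟨e, rfl⟩ | ⟨e, h'⟩ | ⟨h', rfl⟩)
    all_goals first
      | (left; exact hS.trans _ _ _ h h')
      | (right; left; exact hT.trans _ _ _ h h')
      | (right; right; left; exact ⟨rfl, rfl⟩)
      | (right; right; right; right; exact ⟨hT.trans _ _ _ h' (hT.symm _ _ h), rfl⟩)
      | (right; right; right; left; exact ⟨rfl, hT.trans _ _ _ h h'⟩)
      | (right; right; right; left; exact ⟨rfl, h'⟩)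
      | (right; right; right; right; exact ⟨h, rfl⟩)
      | (right; left; exact hT.trans _ _ _ (hT.symm _ _ h) h')
      | (exfalso; have := s1 _ _ h; have := t1 _ _ h'; omega)
      | (exfalso; have := t1 _ _ h; have := s1 _ _ h'; omega)
      | (exfalso; have := s1 _ _ h; omega)
      | (exfalso; have := s1 _ _ h'; omega)
      | (exfalso; have := t1 _ _ h; omega)
      | (exfalso; have := t1 _ _ h'; omega)
  · rintro x y (h | h | ⟨rfl, rfl⟩ | ⟨rfl, h⟩ | ⟨h, rfl⟩)
    · exact hS.par _ _ h
    · exact hT.par _ _ h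
    · rfl
    · have := hT.par _ _ h; omega
    · have := hT.par _ _ h; omega
  · intro x y hax hxy hyb hpar
    constructor
    · rintro (h | h | ⟨rfl, rfl⟩ | ⟨rfl, h⟩ | ⟨h, rfl⟩) u v hu1 hu2 hup huv
      · have := s1 _ _ h
        rcases huv with h' | h' | ⟨rfl, rfl⟩ | ⟨rfl, h'⟩ | ⟨h', rfl⟩
        · exact hS.opp h h' hu1 hu2 hup
        · have := t1 _ _ h'; omega
        · omega
        · omega
        · have := t1 _ _ h'; omega
      · have := t1 _ _ h
        rcases huv with h' | h' | ⟨rfl, rfl⟩ | ⟨rfl, h'⟩ | ⟨h', rfl⟩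
        · have := s1 _ _ h'; omega
        · exact hT.opp h h' hu1 hu2 hup
        · omega
        · omega
        · have := hT.opp h (hT.symm _ _ h') hu1 hu2 hup
          omega
      · omega
      · have := t1 _ _ h
        rcases huv with h' | h' | ⟨rfl, rfl⟩ | ⟨rfl, h'⟩ | ⟨h', rfl⟩
        · have := s1 _ _ h'; omega
        · have := t1 _ _ h'
          have := hT.opp h h' (by have : u ≠ j := (by rintro rfl; omega); omega) hu2 (by omega)
          omega
        · omega
        · omega
        · have := hT.par _ _ h'; omega
      · have := t1 _ _ h; omega
    · intro H
      rcases eq_or_lt_of_le hax with rfl | hax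
      · have hjy : j ≤ y := by
          by_contra hcon
          have := H (a+1) (j-1) (by omega) (by omega) (by omega) (Or.inl hS.ab)
          omega
        right; right; right; left
        refine ⟨rfl, ?_⟩
        rcases eq_or_lt_of_le hjy with rfl | hjy
        · exact tj
        · refine (hT.comp j y le_rfl hjy hyb (by omega)).2 fun u v h1 h2 h3 h4 => ?_
          have k1 := H u v (by omega) h2 (by omega) (Or.inr (Or.inl h4))
          have k2 := t1 _ _ h4
          have k3 := hT.par _ _ h4
          have : v ≠ j := by rintro rfl; omega
          omega
      · by_cases hxj : x < j
        · by_cases hyj : y < j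
          · left
            refine (hS.comp x y (by omega) hxy (by omega) hpar).2 fun u v h1 h2 h3 h4 => ?_
            exact H u v h1 h2 h3 (Or.inl h4)
          · exfalso
            by_cases hpx : x % 2 = a % 2
            · have := H (j-1) (a+1) (by omega) (by omega) (by omega) (Or.inl (hS.symm _ _ hS.ab))
              omega
            · have : y ≠ j := by rintro rfl; omega
              have := H j a (by omega) (by omega) (by omega)
                (Or.inr (Or.inr (Or.inr (Or.inr ⟨tj, rfl⟩))))
              omega
        · right; left
          refine (hT.comp x y (by omega) hxy (by omega) hpar).2 fun u v h1 h2 h3 h4 => ?_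
          exact H u v h1 h2 h3 (Or.inr (Or.inl h4))
  · right; right; right; left
    exact ⟨rfl, hT.ab⟩

theorem res_left (h : GR a b R) (hj : R a j) (haj : a < j) (hn : ∀ y, R a y → a < y → j ≤ y) :
    GR (a+1) (j-1) (fun x y => R x y ∧ a < x ∧ x < j ∧ a < y ∧ y < j) := by
  have hjs := h.sub' hj
  have hpj := h.par _ _ hj
  have hintr := fun u v => h.interior hj hn (u := u) (v := v)
  refine ⟨?_, ?_, ?_, ?_, ?_, ?_, ?_⟩
  · intro x y h; omega
  · intro x h1 h2; exact ⟨h.rfl' x (by omega) (by omega), by omega, by omega, by omega, by omega⟩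
  · intro x y ⟨h1, h2⟩; exact ⟨h.symm _ _ h1, by omega⟩
  · intro x y z ⟨h1, h2⟩ ⟨h3, h4⟩; exact ⟨h.trans _ _ _ h1 h3, by omega⟩
  · intro x y ⟨h1, h2⟩; exact h.par _ _ h1
  · intro x y h1 h2 h3 h4
    constructor
    · rintro ⟨h5, h6⟩ u v k1 k2 k3 k4
      exact h.opp h5 k4.1 k1 k2 k3
    · intro H
      refine ⟨(h.comp x y (by omega) h2 (by omega) h4).2 fun u v k1 k2 k3 k4 => ?_, by omega⟩
      have := hintr u v k4 (by omega) (by omega)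
      exact H u v k1 k2 k3 ⟨k4, by omega⟩
  · have : R (a+1) (j-1) := by
      rcases eq_or_ne (j-1) (a+1) with e | e
      · rw [e]; exact h.rfl' _ (by omega) (by omega)
      · refine (h.comp (a+1) (j-1) (by omega) (by omega) (by omega) (by omega)).2
          fun u v k1 k2 k3 k4 => ?_
        have := hintr u v k4 (by omega) (by omega)
        have := h.par _ _ k4
        omega
    exact ⟨this, by omega⟩

theorem res_right (h : GR a b R) (hj : R a j) (haj : a < j) (hn : ∀ y, R a y → a < y → j ≤ y) :
    GR j b (fun x y => R x y ∧ j ≤ x ∧ j ≤ y) := by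
  have hjs := h.sub' hj
  have hpj := h.par _ _ hj
  have hintr := fun u v => h.interior hj hn (u := u) (v := v)
  refine ⟨?_, ?_, ?_, ?_, ?_, ?_, ?_⟩
  · intro x y h'; have := h.sub' h'.1; omega
  · intro x h1 h2; exact ⟨h.rfl' x (by omega) (by omega), by omega, by omega⟩
  · intro x y ⟨h1, h2⟩; exact ⟨h.symm _ _ h1, by omega⟩
  · intro x y z ⟨h1, h2⟩ ⟨h3, h4⟩; exact ⟨h.trans _ _ _ h1 h3, by omega⟩
  · intro x y ⟨h1, h2⟩; exact h.par _ _ h1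
  · intro x y h1 h2 h3 h4
    constructor
    · rintro ⟨h5, h6⟩ u v k1 k2 k3 k4
      exact h.opp h5 k4.1 k1 k2 k3
    · intro H
      refine ⟨(h.comp x y (by omega) h2 (by omega) h4).2 fun u v k1 k2 k3 k4 => ?_, by omega⟩
      have hs := h.sub' k4
      by_cases hv : j ≤ v
      · exact H u v k1 k2 k3 ⟨k4, by omega, hv⟩
      · exfalso
        rcases eq_or_lt_of_le hs.2.2.1 with e | e
        · subst e
          have := h.par _ _ k4
          have := H u j k1 k2 k3 ⟨h.trans _ _ _ k4 hj, by omega, by omega⟩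
          omega
        · have := hintr v u (h.symm _ _ k4) e (by omega)
          omega
  · exact ⟨h.trans _ _ _ (h.symm _ _ hj) h.ab, by omega, by omega⟩

theorem glue_res (h : GR a b R) (hj : R a j) (haj : a < j) (hn : ∀ y, R a y → a < y → j ≤ y)
    (x y : ℕ) : glue a j (fun x y => R x y ∧ a < x ∧ x < j ∧ a < y ∧ y < j)
      (fun x y => R x y ∧ j ≤ x ∧ j ≤ y) x y ↔ R x y := by
  have hintr := fun u v => h.interior hj hn (u := u) (v := v)
  have hjs := h.sub' hj
  constructor
  · rintro (h' | h' | ⟨rfl, rfl⟩ | ⟨rfl, h'⟩ | ⟨h', rfl⟩)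
    · exact h'.1
    · exact h'.1
    · exact h.rfl' _ le_rfl (by omega)
    · exact h.trans _ _ _ hj h'.1
    · exact h.symm _ _ (h.trans _ _ _ hj h'.1)
  · intro h'
    have hs := h.sub' h'
    by_cases hx : x = a
    · subst hx
      by_cases hy : y = x
      · right; right; left; exact ⟨rfl, hy⟩
      · right; right; right; left
        have := hn y h' (by omega)
        exact ⟨rfl, h.trans _ _ _ (h.symm _ _ hj) h', le_rfl, this⟩
    · by_cases hxj : x < j
      · left
        have := hintr x y h' (by omega) hxj
        exact ⟨h', by omega⟩
      · by_cases hy : y = a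
        · subst hy
          right; right; right; right
          exact ⟨⟨h.trans _ _ _ (h.symm _ _ hj) (h.symm _ _ h'), le_rfl, by omega⟩, rfl⟩
        · right; left
          refine ⟨h', by omega, ?_⟩
          by_contra hyj
          have := hintr y x (h.symm _ _ h') (by omega) (by omega)
          omega

end GR

/-- good relations as finsets of pairs -/
def Good (a b : ℕ) (r : Finset (ℕ × ℕ)) : Prop := GR a b (fun x y => (x, y) ∈ r)

noncomputable def GoodSet (a b : ℕ) : Finset (Finset (ℕ × ℕ)) :=
  ((Icc a b ×ˢ Icc a b).powerset).filter (Good a b)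

theorem mem_GoodSet {a b : ℕ} {r : Finset (ℕ × ℕ)} : r ∈ GoodSet a b ↔ Good a b r := by
  simp only [GoodSet, mem_filter, mem_powerset, and_iff_right_iff_imp]
  rintro h ⟨x, y⟩ hxy
  have := GR.sub' h hxy
  simp; omega

noncomputable def blk (r : Finset (ℕ × ℕ)) (x : ℕ) : Finset ℕ :=
  (r.filter (fun p => p.1 = x)).image Prod.snd

theorem mem_blk {r : Finset (ℕ × ℕ)} {x y : ℕ} : y ∈ blk r x ↔ (x, y) ∈ r := by
  simp only [blk, mem_image, mem_filter, Prod.exists]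
  constructor
  · rintro ⟨u, v, ⟨h, rfl⟩, rfl⟩; exact h
  · intro h; exact ⟨x, y, ⟨h, rfl⟩, rfl⟩

/-- `x` is the minimum of its class -/
def IsMn (r : Finset (ℕ × ℕ)) (x : ℕ) : Prop := ∀ y, (x, y) ∈ r → x ≤ y

noncomputable def wt (W : Finset ℕ → ℂ) (r : Finset (ℕ × ℕ)) (x : ℕ) : ℂ :=
  if IsMn r x then W (blk r x) else 1

/-- weighted sums over good relations -/
noncomputable def E (W0 W : Finset ℕ → ℂ) (a b : ℕ) : ℂ :=
  ∑ r ∈ GoodSet a b, W0 (blk r a) * ∏ x ∈ Ioc a b, wt W r x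

theorem E_single (W0 W : Finset ℕ → ℂ) (a : ℕ) : E W0 W a a = W0 {a} := by
  have : GoodSet a a = {{(a, a)}} := by
    ext r
    rw [mem_GoodSet, mem_singleton]
    constructor
    · intro h
      ext ⟨x, y⟩
      constructor
      · intro hxy
        have := GR.sub' h hxy
        simp; omega
      · intro hxy
        simp at hxy
        obtain ⟨rfl, rfl⟩ := hxy
        exact h.ab
    · rintro rfl
      refine ⟨?_, ?_, ?_, ?_, ?_, ?_, ?_⟩ <;> simp <;> intros <;> omega
  rw [E, this]
  simp only [sum_singleton, Ioc_self, prod_empty, mul_one]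
  congr 1
  ext y
  rw [mem_blk]; simp

noncomputable def glueF (a b j : ℕ) (s t : Finset (ℕ × ℕ)) : Finset (ℕ × ℕ) :=
  (Icc a b ×ˢ Icc a b).filter
    (fun p => GR.glue a j (fun x y => (x, y) ∈ s) (fun x y => (x, y) ∈ t) p.1 p.2)

section
variable {a b j : ℕ} {s t : Finset (ℕ × ℕ)}

theorem mem_glueF (haj : a < j) (hjb : j ≤ b) (hp : j % 2 = a % 2)
    (hS : Good (a+1) (j-1) s) (hT : Good j b t) (x y : ℕ) :
    (x, y) ∈ glueF a b j s t ↔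
      GR.glue a j (fun x y => (x, y) ∈ s) (fun x y => (x, y) ∈ t) x y := by
  have := GR.glue_good haj hjb hp hS hT
  simp only [glueF, mem_filter, mem_product, mem_Icc, and_iff_right_iff_imp]
  intro h
  have := this.sub' h
  omega

theorem glueF_good (haj : a < j) (hjb : j ≤ b) (hp : j % 2 = a % 2)
    (hS : Good (a+1) (j-1) s) (hT : Good j b t) : Good a b (glueF a b j s t) := by
  have := GR.glue_good haj hjb hp hS hT
  have e : (fun x y => (x, y) ∈ glueF a b j s t) =
      GR.glue a j (fun x y => (x, y) ∈ s) (fun x y => (x, y) ∈ t) := by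
    funext x y; exact propext (mem_glueF haj hjb hp hS hT x y)
  rw [Good, e]; exact this

theorem glueF_a (haj : a < j) (hjb : j ≤ b) (hp : j % 2 = a % 2)
    (hS : Good (a+1) (j-1) s) (hT : Good j b t) (y : ℕ) :
    (a, y) ∈ glueF a b j s t ↔ y = a ∨ (j, y) ∈ t := by
  rw [mem_glueF haj hjb hp hS hT]
  constructor
  · rintro (h | h | h | h | h)
    · have := GR.sub' hS h; omega
    · have := GR.sub' hT h; omega
    · exact Or.inl h.2
    · exact Or.inr h.2
    · have := GR.sub' hT h.1; omega
  · rintro (rfl | h)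
    · right; right; left; exact ⟨rfl, rfl⟩
    · right; right; right; left; exact ⟨rfl, h⟩

theorem glueF_l (haj : a < j) (hjb : j ≤ b) (hp : j % 2 = a % 2)
    (hS : Good (a+1) (j-1) s) (hT : Good j b t) (x y : ℕ) (h1 : a < x) (h2 : x < j) :
    (x, y) ∈ glueF a b j s t ↔ (x, y) ∈ s := by
  rw [mem_glueF haj hjb hp hS hT]
  constructor
  · rintro (h | h | h | h | h)
    · exact h
    · have := GR.sub' hT h; omega
    · omega
    · omega
    · have := GR.sub' hT h.1; omega
  · intro h; left; exact h

theorem glueF_r (haj : a < j) (hjb : j ≤ b) (hp : j % 2 = a % 2)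
    (hS : Good (a+1) (j-1) s) (hT : Good j b t) (x y : ℕ) (h2 : j ≤ x) :
    (x, y) ∈ glueF a b j s t ↔ (x, y) ∈ t ∨ ((j, x) ∈ t ∧ y = a) := by
  rw [mem_glueF haj hjb hp hS hT]
  constructor
  · rintro (h | h | h | h | h)
    · have := GR.sub' hS h; omega
    · exact Or.inl h
    · omega
    · omega
    · exact Or.inr h
  · rintro (h | h)
    · right; left; exact h
    · right; right; right; right; exact h

theorem glueF_weight (W0 W : Finset ℕ → ℂ) (haj : a < j) (hjb : j ≤ b) (hp : j % 2 = a % 2)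
    (hS : Good (a+1) (j-1) s) (hT : Good j b t) :
    W0 (blk (glueF a b j s t) a) * ∏ x ∈ Ioc a b, wt W (glueF a b j s t) x =
    (W (blk s (a+1)) * ∏ x ∈ Ioc (a+1) (j-1), wt W s x) *
      (W0 (insert a (blk t j)) * ∏ x ∈ Ioc j b, wt W t x) := by
  have e0 : blk (glueF a b j s t) a = insert a (blk t j) := by
    ext y; rw [mem_blk, glueF_a haj hjb hp hS hT, mem_insert, mem_blk]
  have el : ∀ x, a < x → x < j → wt W (glueF a b j s t) x = wt W s x := by
    intro x h1 h2
    have eb : blk (glueF a b j s t) x = blk s x := by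
      ext y; rw [mem_blk, mem_blk, glueF_l haj hjb hp hS hT x y h1 h2]
    have em : IsMn (glueF a b j s t) x ↔ IsMn s x := by
      simp only [IsMn, glueF_l haj hjb hp hS hT x _ h1 h2]
    simp only [wt, eb, em]
  have er : ∀ x, j < x → wt W (glueF a b j s t) x = wt W t x := by
    intro x h1
    by_cases hx : (j, x) ∈ t
    · have m1 : ¬ IsMn t x := fun h => by have := h j (hT.symm _ _ hx); omega
      have m2 : ¬ IsMn (glueF a b j s t) x := fun h => by
        have := h a ((glueF_r haj hjb hp hS hT x a h1.le).2 (Or.inr ⟨hx, rfl⟩)); omega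
      simp [wt, m1, m2]
    · have ee : ∀ y, (x, y) ∈ glueF a b j s t ↔ (x, y) ∈ t := fun y => by
        rw [glueF_r haj hjb hp hS hT x y h1.le]; tauto
      have eb : blk (glueF a b j s t) x = blk t x := by
        ext y; rw [mem_blk, mem_blk, ee]
      have em : IsMn (glueF a b j s t) x ↔ IsMn t x := by
        simp only [IsMn, ee]
      simp only [wt, eb, em]
  have ej : wt W (glueF a b j s t) j = 1 := by
    rw [wt, if_neg]
    intro h
    have := h a ((glueF_r haj hjb hp hS hT j a le_rfl).2 (Or.inr ⟨hT.rfl' j le_rfl hjb, rfl⟩))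
    omega
  have haj2 : a + 1 < j := by omega
  have e1 : wt W s (a+1) = W (blk s (a+1)) := by
    rw [wt, if_pos]
    intro y hy
    have := GR.sub' hS hy; omega
  have s1 : ∀ n : ℕ, ∀ F : ℕ → ℂ, ∏ x ∈ Ioc n (n+1), F x = F (n+1) := by
    intro n F; simp
  rw [e0, ← prod_Ioc_consecutive _ haj.le hjb,
    ← prod_Ioc_consecutive _ (show a ≤ a+1 by omega) haj2.le,
    ← prod_Ioc_consecutive _ (show a + 1 ≤ j - 1 by omega) (show j - 1 ≤ j by omega), s1]
  have s2 : ∏ x ∈ Ioc (j-1) j, wt W (glueF a b j s t) x = 1 := by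
    obtain ⟨m, rfl⟩ : ∃ m, j = m + 1 := ⟨j-1, by omega⟩
    simp only [Nat.add_sub_cancel] at *
    rw [s1, ej]
  have s3 : ∏ x ∈ Ioc (a+1) (j-1), wt W (glueF a b j s t) x = ∏ x ∈ Ioc (a+1) (j-1), wt W s x :=
    prod_congr rfl fun x hx => by rw [mem_Ioc] at hx; exact el x (by omega) (by omega)
  have s4 : ∏ x ∈ Ioc j b, wt W (glueF a b j s t) x = ∏ x ∈ Ioc j b, wt W t x :=
    prod_congr rfl fun x hx => by rw [mem_Ioc] at hx; exact er x (by omega)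
  rw [s2, s3, s4, el (a+1) (by omega) haj2, e1]
  ring
end

theorem E_step (W0 W : Finset ℕ → ℂ) {a b : ℕ} (hab : a < b) (hpar : a % 2 = b % 2) :
    E W0 W a b = ∑ j ∈ (Ioc a b).filter (fun j => j % 2 = a % 2),
      E W W (a+1) (j-1) * E (fun B => W0 (insert a B)) W j b := by
  let nx : Finset (ℕ × ℕ) → ℕ := fun r => sInf {y | (a, y) ∈ r ∧ a < y}
  have nx1 : ∀ r, Good a b r → (a, nx r) ∈ r ∧ a < nx r ∧ ∀ y, (a, y) ∈ r → a < y → nx r ≤ y := by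
    intro r h
    have : nx r ∈ {y | (a, y) ∈ r ∧ a < y} := Nat.sInf_mem ⟨b, h.ab, hab⟩
    exact ⟨this.1, this.2, fun y h1 h2 => Nat.sInf_le ⟨h1, h2⟩⟩
  have nx2 : ∀ r j, Good a b r → (a, j) ∈ r → a < j → (∀ y, (a, y) ∈ r → a < y → j ≤ y) →
      nx r = j := fun r j h h1 h2 h3 => by
    obtain ⟨k1, k2, k3⟩ := nx1 r h
    exact le_antisymm (k3 _ h1 h2) (h3 _ k1 k2)
  have hm : ∀ r ∈ GoodSet a b, nx r ∈ (Ioc a b).filter (fun j => j % 2 = a % 2) := by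
    intro r hr
    rw [mem_GoodSet] at hr
    obtain ⟨k1, k2, k3⟩ := nx1 r hr
    have := GR.sub' hr k1
    have := hr.par _ _ k1
    simp; omega
  rw [E, ← sum_fiberwise_of_maps_to hm]
  refine sum_congr rfl fun j hj => ?_
  simp only [mem_filter, mem_Ioc] at hj
  obtain ⟨⟨haj, hjb⟩, hp⟩ := hj
  rw [E, E, sum_mul_sum, ← sum_product']
  symm
  refine sum_bij' (fun st _ => glueF a b j st.1 st.2)
    (fun r _ => (r.filter (fun p => a < p.1 ∧ p.1 < j ∧ a < p.2 ∧ p.2 < j),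
      r.filter (fun p => j ≤ p.1 ∧ j ≤ p.2))) ?_ ?_ ?_ ?_ ?_
  · rintro ⟨s, t⟩ hst
    rw [mem_product, mem_GoodSet, mem_GoodSet] at hst
    obtain ⟨hS, hT⟩ := hst
    have hg := glueF_good haj hjb hp hS hT
    rw [mem_filter, mem_GoodSet]
    refine ⟨hg, nx2 _ _ hg ?_ haj ?_⟩
    · rw [glueF_a haj hjb hp hS hT]; right; exact hT.rfl' _ le_rfl hjb
    · intro y hy hay
      rw [glueF_a haj hjb hp hS hT] at hy
      rcases hy with rfl | hy
      · omega
      · have := GR.sub' hT hy; omega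
  · intro r hr
    rw [mem_filter, mem_GoodSet] at hr
    obtain ⟨hr, rfl⟩ := hr
    obtain ⟨k1, k2, k3⟩ := nx1 r hr
    rw [mem_product, mem_GoodSet, mem_GoodSet]
    have h1 := GR.res_left hr k1 k2 k3
    have h2 := GR.res_right hr k1 k2 k3
    constructor
    · simpa only [Good, mem_filter] using h1
    · simpa only [Good, mem_filter] using h2
  · rintro ⟨s, t⟩ hst
    rw [mem_product, mem_GoodSet, mem_GoodSet] at hst
    obtain ⟨hS, hT⟩ := hst
    simp only at hS hT
    refine Prod.ext ?_ ?_
    · ext ⟨x, y⟩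
      simp only [mem_filter]
      constructor
      · rintro ⟨h1, h2⟩
        exact (glueF_l haj hjb hp hS hT x y h2.1 h2.2.1).1 h1
      · intro h1
        have := GR.sub' hS h1
        exact ⟨(glueF_l haj hjb hp hS hT x y (by omega) (by omega)).2 h1, by omega⟩
    · ext ⟨x, y⟩
      simp only [mem_filter]
      constructor
      · rintro ⟨h1, h2⟩
        rcases (glueF_r haj hjb hp hS hT x y h2.1).1 h1 with h | h
        · exact h
        · omega
      · intro h1
        have := GR.sub' hT h1
        exact ⟨(glueF_r haj hjb hp hS hT x y (by omega)).2 (Or.inl h1), by omega⟩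
  · intro r hr
    rw [mem_filter, mem_GoodSet] at hr
    obtain ⟨hr, rfl⟩ := hr
    obtain ⟨k1, k2, k3⟩ := nx1 r hr
    ext ⟨x, y⟩
    have h0 := GR.glue_res hr k1 k2 k3 x y
    simp only [glueF, mem_filter, mem_product, mem_Icc]
    rw [h0]
    constructor
    · exact fun h => h.2
    · intro h
      have := GR.sub' hr h
      exact ⟨by omega, h⟩
  · rintro ⟨s, t⟩ hst
    rw [mem_product, mem_GoodSet, mem_GoodSet] at hst
    exact (glueF_weight W0 W haj hjb hp hst.1 hst.2).symm

theorem E_congr {W0 W W0' W' : Finset ℕ → ℂ} {a b : ℕ}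
    (h0 : ∀ B, B ⊆ Icc a b → a ∈ B → b ∈ B → (∀ x ∈ B, x % 2 = a % 2) → W0 B = W0' B)
    (h : ∀ B x, x ∈ B → (∀ y ∈ B, a ≤ y ∧ y ≤ b) → (∀ y ∈ B, y % 2 = x % 2) → W B = W' B)
    (hab : a ≤ b) :
    E W0 W a b = E W0' W' a b := by
  refine sum_congr rfl fun r hr => ?_
  rw [mem_GoodSet] at hr
  congr 1
  · refine h0 _ ?_ ?_ ?_ ?_
    · intro y hy
      rw [mem_blk] at hy
      have := GR.sub' hr hy
      rw [mem_Icc]; omega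
    · rw [mem_blk]; exact hr.rfl' _ le_rfl hab
    · rw [mem_blk]; exact hr.ab
    · intro x hx
      rw [mem_blk] at hx; exact (hr.par _ _ hx).symm
  · refine prod_congr rfl fun x hx => ?_
    rw [mem_Ioc] at hx
    rw [wt, wt]
    congr 1
    refine h _ x ?_ ?_ ?_
    · rw [mem_blk]; exact hr.rfl' _ (by omega) (by omega)
    · intro y hy
      rw [mem_blk] at hy
      have := GR.sub' hr hy
      omega
    · intro y hy
      rw [mem_blk] at hy; exact (hr.par _ _ hy).symm

section series
open Ser
variable {k : ℕ}

/-- subword of `w` on `[s,t)` -/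
def word (w : ℕ → Fin k) (s t : ℕ) : List (Fin k) := (List.range' s (t - s)).map w

theorem word_self (w : ℕ → Fin k) (s) : word w s s = [] := by simp [word]
theorem word_cons (w : ℕ → Fin k) {s t} (h : s < t) : word w s t = w s :: word w (s+1) t := by
  obtain ⟨d, rfl⟩ : ∃ d, t = s + 1 + d := ⟨t - (s+1), by omega⟩
  have e1 : s + 1 + d - s = d + 1 := by omega
  have e2 : s + 1 + d - (s + 1) = d := by omega
  rw [word, word, e1, e2, List.range'_succ, List.map_cons]
theorem word_append (w : ℕ → Fin k) {s t} (h : s ≤ t) : word w s (t+1) = word w s t ++ [w t] := by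
  obtain ⟨d, rfl⟩ : ∃ d, t = s + d := ⟨t - s, by omega⟩
  have e1 : s + d + 1 - s = d + 1 := by omega
  have e2 : s + d - s = d := by omega
  rw [word, word, e1, e2, List.range'_concat]; simp

theorem mul_word (w : ℕ → Fin k) (c d : Ser k) {s t} (h : s ≤ t) :
    (c * d : Ser k) (word w s t) = ∑ j ∈ Icc s t, c (word w s j) * d (word w j t) := by
  obtain ⟨n, rfl⟩ : ∃ n, t = s + n := ⟨t - s, by omega⟩
  induction n generalizing s c with
  | zero => simp [word_self]
  | succ n ih =>
    rw [word_cons w (show s < s + (n+1) by omega), mul_cons]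
    have e : s + (n + 1) = (s + 1) + n := by omega
    have hI : Icc s (s + (n+1)) = insert s (Icc (s+1) (s + 1 + n)) := by
      ext x; simp only [mem_Icc, mem_insert]; omega
    rw [hI, sum_insert (by simp), word_self, e, ih (dl (w s) c) (by omega),
      ← word_cons w (by omega)]
    congr 1
    refine sum_congr rfl fun j hj => ?_
    rw [mem_Icc] at hj
    rw [word_cons w (show s < j by omega)]; rfl

/-- coefficient of `f` at the subword of `w` selected by `C` -/
noncomputable def lst (w : ℕ → Fin k) (f : Ser k) (C : Finset ℕ) : ℂ := f ((C.sort).map w)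

theorem lst_insert (w : ℕ → Fin k) (f : Ser k) (C : Finset ℕ) (s) (h : ∀ x ∈ C, s < x) :
    lst w f (insert s C) = lst w (dl (w s) f) C := by
  rw [lst, sort_insert _ (fun b hb => (h b hb).le) (fun hs => lt_irrefl _ (h s hs))]
  rfl
theorem lst_singleton (w : ℕ → Fin k) (f : Ser k) (s) : lst w f {s} = f [w s] := by
  rw [lst, sort_singleton]; rfl
theorem lst_empty (w : ℕ → Fin k) (f : Ser k) : lst w f ∅ = f [] := by
  rw [lst, sort_empty]; rfl

noncomputable def We (w : ℕ → Fin k) (f : Ser k) (B : Finset ℕ) : ℂ := lst w f (B.image (· / 2))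

noncomputable def Wt (w : ℕ → Fin k) (f g : Ser k) (B : Finset ℕ) : ℂ :=
  if ∀ x ∈ B, x % 2 = 0 then We w f B else We w g B

theorem We_insert (w : ℕ → Fin k) (f : Ser k) (B : Finset ℕ) (a s) (ha : a / 2 = s)
    (h : ∀ x ∈ B, s < x / 2) : We w f (insert a B) = We w (dl (w s) f) B := by
  rw [We, image_insert, ha, lst_insert]; rfl
  intro x hx
  rw [mem_image] at hx
  obtain ⟨y, hy, rfl⟩ := hx
  exact h y hy

theorem E_step_even (W0 W : Finset ℕ → ℂ) {s t : ℕ} (h : s < t) :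
    E W0 W (2*s) (2*t) = ∑ u ∈ Ico s t,
      E W W (2*s+1) (2*u+1) * E (fun B => W0 (insert (2*s) B)) W (2*(u+1)) (2*t) := by
  rw [E_step _ _ (by omega) (by omega)]
  refine sum_bij' (fun j _ => j / 2 - 1) (fun u _ => 2*(u+1)) ?_ ?_ ?_ ?_ ?_
  · intro j hj; simp at hj ⊢; omega
  · intro j hj; simp at hj ⊢; omega
  · intro j hj; simp at hj ⊢; omega
  · intro j hj; simp at hj ⊢
  · intro j hj
    simp at hj
    have e1 : j - 1 = 2 * (j / 2 - 1) + 1 := by omega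
    have e2 : 2 * (j / 2 - 1 + 1) = j := by omega
    simp only [e2, ← e1]

theorem E_step_odd (W0 W : Finset ℕ → ℂ) {s t : ℕ} (h : s < t) :
    E W0 W (2*s+1) (2*t+1) = ∑ u ∈ Ico s t,
      E W W (2*(s+1)) (2*(u+1)) * E (fun B => W0 (insert (2*s+1) B)) W (2*(u+1)+1) (2*t+1) := by
  rw [E_step _ _ (by omega) (by omega)]
  refine sum_bij' (fun j _ => j / 2 - 1) (fun u _ => 2*(u+1)+1) ?_ ?_ ?_ ?_ ?_
  · intro j hj; simp at hj ⊢; omega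
  · intro j hj; simp at hj ⊢; omega
  · intro j hj; simp at hj ⊢; omega
  · intro j hj; simp at hj ⊢; omega
  · intro j hj
    simp at hj
    have e1 : j - 1 = 2 * (j / 2 - 1 + 1) := by omega
    have e2 : 2 * (j / 2 - 1 + 1) + 1 = j := by omega
    simp only [e2]
    rw [← e1, show 2 * (s + 1) = 2 * s + 1 + 1 from rfl]

theorem E_WW_even (w : ℕ → Fin k) (f g : Ser k) {s t : ℕ} (h : s ≤ t) :
    E (Wt w f g) (Wt w f g) (2*s) (2*t) = E (We w f) (Wt w f g) (2*s) (2*t) := by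
  refine E_congr (fun B h1 h2 h3 h4 => ?_) (fun _ _ _ _ _ => rfl) (by omega)
  rw [Wt, if_pos]
  intro x hx
  have := h4 x hx; omega

theorem E_WW_odd (w : ℕ → Fin k) (f g : Ser k) {s t : ℕ} (h : s ≤ t) :
    E (Wt w f g) (Wt w f g) (2*s+1) (2*t+1) = E (We w g) (Wt w f g) (2*s+1) (2*t+1) := by
  refine E_congr (fun B h1 h2 h3 h4 => ?_) (fun _ _ _ _ _ => rfl) (by omega)
  rw [Wt, if_neg]
  intro hx
  have := hx _ h2; omega

theorem phiH_word {f g : Ser k} {H L} (h : HL f g H L) (w : ℕ → Fin k) (c : Ser k) {s t : ℕ}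
    (hst : s < t) : phi H c (word w s t) = ∑ u ∈ Ico s t,
      phi L (dl (w s) g) (word w (s+1) (u+1)) * phi H (dl (w s) c) (word w (u+1) t) := by
  have e : phi H c (word w s t) =
      (phi L (dl (w s) g) * phi H (dl (w s) c) : Ser k) (word w (s+1) t) := by
    rw [phi_eq h.H_nil, word_cons w hst, add_app, C_cons, zero_add, sum_app]
    simp only [h.1, mul_assoc, z_mul_cons]
    rw [sum_ite_eq]; simp
  rw [e, mul_word _ _ _ (by omega)]
  refine sum_bij' (fun j _ => j - 1) (fun u _ => u+1) ?_ ?_ ?_ ?_ ?_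
  · intro j hj; simp at hj ⊢; omega
  · intro j hj; simp at hj ⊢; omega
  · intro j hj; simp at hj ⊢; omega
  · intro j hj; simp at hj ⊢
  · intro j hj
    simp at hj
    have e1 : j - 1 + 1 = j := by omega
    simp only [e1]

theorem phiL_word {f g : Ser k} {H L} (h : HL f g H L) (w : ℕ → Fin k) (c : Ser k) {s t : ℕ}
    (hst : s < t) : phi L c (word w s t) = ∑ u ∈ Ico s t,
      phi H (dr (w u) f) (word w s u) * phi L (dl (w u) c) (word w (u+1) t) := by
  have hI : Icc s t = insert s ((Ico s t).image (· + 1)) := by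
    ext x; simp only [mem_Icc, mem_insert, mem_image, mem_Ico]
    constructor
    · intro hx
      by_cases hs : x = s
      · exact Or.inl hs
      · exact Or.inr ⟨x - 1, by omega, by omega⟩
    · rintro (h | ⟨y, h, rfl⟩) <;> omega
  have e : ∀ i, (L i * phi L (dl i c) : Ser k) (word w s t) = ∑ u ∈ Ico s t,
      if w u = i then phi H (dr i f) (word w s u) * phi L (dl i c) (word w (u+1) t) else 0 := by
    intro i
    rw [mul_word _ _ _ hst.le, hI, sum_insert (by simp), word_self, h.L_nil, zero_mul, zero_add,
      sum_image (by simp)]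
    refine sum_congr rfl fun u hu => ?_
    rw [mem_Ico] at hu
    rw [word_append w hu.1, h.2, mul_z_append]
    split_ifs <;> simp
  have e0 : ∀ x, (C x : Ser k) (word w s t) = 0 := fun x => by rw [word_cons w hst, C_cons]
  rw [phi_eq h.L_nil, add_app, e0, zero_add, sum_app]
  simp only [e]
  rw [sum_comm]
  refine sum_congr rfl fun u hu => ?_
  rw [sum_ite_eq]; simp

theorem E_main {f g : Ser k} {H L} (h : HL f g H L) (w : ℕ → Fin k) (N : ℕ) :
    ∀ s t, s ≤ t → t - s < N →
      (∀ c, E (We w c) (Wt w f g) (2*s) (2*t) = phi H (dr (w t) c) (word w s t)) ∧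
      (∀ c, E (We w c) (Wt w f g) (2*s+1) (2*t+1) = phi L (dl (w s) c) (word w (s+1) (t+1))) := by
  induction N with
  | zero => intro s t _ h; omega
  | succ N ih =>
    intro s t hst hN
    rcases eq_or_lt_of_le hst with rfl | hst
    · constructor
      · intro c
        rw [E_single, word_self, phi_nil]
        simp only [We, image_singleton, dr, List.nil_append]
        rw [Nat.mul_div_cancel_left _ (by omega), lst_singleton]
      · intro c
        rw [E_single, word_self, phi_nil]
        simp only [We, image_singleton, dl]
        rw [show (2*s+1)/2 = s by omega, lst_singleton]
    · constructor
      · intro c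
        rw [E_step_even _ _ hst, phiH_word h _ _ hst]
        refine sum_congr rfl fun u hu => ?_
        rw [mem_Ico] at hu
        rw [E_WW_odd _ _ _ hu.1, (ih s u hu.1 (by omega)).2, dl_dr,
          ← (ih (u+1) t (by omega) (by omega)).1]
        congr 1
        refine E_congr (fun B h1 h2 h3 h4 => ?_) (fun _ _ _ _ _ => rfl) (by omega)
        refine We_insert _ _ _ _ _ (by omega) fun x hx => ?_
        have := h1 hx
        rw [mem_Icc] at this; omega
      · intro c
        rw [E_step_odd _ _ hst, phiL_word h _ _ (show s + 1 < t + 1 by omega)]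
        rw [sum_Ico_add' _ s t 1 |>.symm]
        refine sum_congr rfl fun u hu => ?_
        rw [mem_Ico] at hu
        rw [E_WW_even _ _ _ (by omega), (ih (s+1) (u+1) (by omega) (by omega)).1,
          ← (ih (u+1) t (by omega) (by omega)).2]
        congr 1
        refine E_congr (fun B h1 h2 h3 h4 => ?_) (fun _ _ _ _ _ => rfl) (by omega)
        refine We_insert _ _ _ _ _ (by omega) fun x hx => ?_
        have := h1 hx
        rw [mem_Icc] at this
        have := h4 x hx
        omega

theorem E_even {f g : Ser k} {H L} (h : HL f g H L) (w : ℕ → Fin k) (c) {s t} (hst : s ≤ t) :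
    E (We w c) (Wt w f g) (2*s) (2*t) = phi H (dr (w t) c) (word w s t) :=
  (E_main h w _ s t hst (Nat.lt_succ_self _)).1 c
theorem E_odd {f g : Ser k} {H L} (h : HL f g H L) (w : ℕ → Fin k) (c) {s t} (hst : s ≤ t) :
    E (We w c) (Wt w f g) (2*s+1) (2*t+1) = phi L (dl (w s) c) (word w (s+1) (t+1)) :=
  (E_main h w _ s t hst (Nat.lt_succ_self _)).2 c

theorem E_plus {f g : Ser k} {H L} (h : HL f g H L) (w : ℕ → Fin k) (c) {s t} (hst : s ≤ t) :
    E (fun B => We w c (B.erase (2*t))) (Wt w f g) (2*s) (2*t) = phi H c (word w s t) := by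
  obtain ⟨n, hn⟩ : ∃ n, n = t - s := ⟨_, rfl⟩
  induction n using Nat.strong_induction_on generalizing s c with
  | _ n ih =>
    rcases eq_or_lt_of_le hst with rfl | hst
    · rw [E_single, word_self, phi_nil]
      simp [We, lst_empty]
    · rw [E_step_even _ _ hst, phiH_word h _ _ hst]
      refine sum_congr rfl fun u hu => ?_
      rw [mem_Ico] at hu
      rw [E_WW_odd _ _ _ hu.1, E_odd h w _ hu.1, ← ih (t - (u+1)) (by omega) _ (by omega) rfl]
      congr 1
      refine E_congr (fun B h1 h2 h3 h4 => ?_) (fun _ _ _ _ _ => rfl) (by omega)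
      rw [erase_insert_of_ne (by omega)]
      refine We_insert _ _ _ _ _ (by omega) fun x hx => ?_
      have := h1 (mem_of_mem_erase hx)
      rw [mem_Icc] at this; omega

/-- the version with `0 ∼ n` forced, used for `Reta` -/
theorem E_reta {f g : Ser k} (w : ℕ → Fin k) (hg : ∀ i, g [i] = 1)
    (c : Finset ℕ → ℂ) {s t} (hst : s ≤ t) :
    E (fun B => if 2*t ∈ B then c (B.erase (2*(t+1))) else 0) (Wt w f g) (2*s) (2*(t+1)) =
      E c (Wt w f g) (2*s) (2*t) := by
  obtain ⟨n, hn⟩ : ∃ n, n = t - s := ⟨_, rfl⟩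
  induction n using Nat.strong_induction_on generalizing s c with
  | _ n ih =>
    rw [E_step_even _ _ (show s < t + 1 by omega), sum_Ico_succ_top (by omega)]
    rw [E_single]
    rcases eq_or_lt_of_le hst with rfl | hst
    · rw [Ico_self, sum_empty, zero_add, E_WW_odd _ _ _ le_rfl, E_single, E_single]
      rw [if_pos (by simp), erase_insert_of_ne (by omega)]
      simp only [We, image_singleton, erase_singleton]
      rw [show (2*s+1)/2 = s by omega, lst_singleton, hg]; simp
    · rw [if_neg (by simp; omega), mul_zero, add_zero, E_step_even _ _ hst]
      refine sum_congr rfl fun u hu => ?_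
      rw [mem_Ico] at hu
      congr 1
      rw [← ih (t - (u+1)) (by omega) _ (by omega) rfl]
      refine E_congr (fun B h1 h2 h3 h4 => ?_) (fun _ _ _ _ _ => rfl) (by omega)
      have : (2 * t ∈ insert (2*s) B) ↔ 2 * t ∈ B := by
        rw [mem_insert]
        constructor
        · rintro (h | h)
          · omega
          · exact h
        · exact Or.inr
      simp only [this]
      rw [erase_insert_of_ne (by omega)]
end series

/-- non-crossing equivalence relation on `{0,…,n}` -/
structure NCE (n : ℕ) (P : ℕ → ℕ → Prop) : Prop where
  sub : ∀ x y, P x y → x ≤ n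
  rfl' : ∀ x, x ≤ n → P x x
  symm : ∀ x y, P x y → P y x
  trans : ∀ x y z, P x y → P y z → P x z
  nc : ∀ i j k l, i < j → j < k → k < l → P i k → P j l → P i j

/-- Kreweras complement relation -/
def Kr (P : ℕ → ℕ → Prop) (u v : ℕ) : Prop :=
  ∀ x y, P x y → ((u < x ↔ v < x) ↔ (u < y ↔ v < y))

theorem Kr.refl (P : ℕ → ℕ → Prop) (u) : Kr P u u := fun x y _ => by simp
theorem Kr.symm {P : ℕ → ℕ → Prop} {u v} (h : Kr P u v) : Kr P v u := fun x y hxy => by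
  have := h x y hxy; tauto
theorem Kr.trans {P : ℕ → ℕ → Prop} {u v t} (h : Kr P u v) (h' : Kr P v t) : Kr P u t :=
  fun x y hxy => by
  have := h x y hxy
  have := h' x y hxy
  tauto

namespace NCE
variable {n : ℕ} {P : ℕ → ℕ → Prop}

theorem sub' (h : NCE n P) {x y} (hxy : P x y) : x ≤ n ∧ y ≤ n :=
  ⟨h.sub _ _ hxy, h.sub _ _ (h.symm _ _ hxy)⟩

theorem kr_of (h : NCE n P) {u v : ℕ} (huv : u ≤ v)
    (H : ∀ x y, P x y → u < x → x ≤ v → u < y ∧ y ≤ v) : Kr P u v := by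
  intro x y hxy
  have h1 := H x y hxy
  have h2 := H y x (h.symm _ _ hxy)
  omega

theorem kr_iff (h : NCE n P) {u v : ℕ} (huv : u ≤ v) :
    Kr P u v ↔ ∀ x y, P x y → u < x → x ≤ v → u < y ∧ y ≤ v := by
  refine ⟨fun hk x y hxy h1 h2 => ?_, h.kr_of huv⟩
  have := hk x y hxy
  omega

theorem kr1 (h : NCE n P) {c d : ℕ} (hcd : P c d) (hlt : c < d)
    (hn : ∀ y, P c y → c < y → d ≤ y) : Kr P c (d-1) := by
  refine h.kr_of (by omega) fun x y hxy h1 h2 => ?_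
  have hx : ¬ P c x := fun hx => by have := hn x hx h1; omega
  have hy : ¬ P c y := fun hy => hx (h.trans _ _ _ hy (h.symm _ _ hxy))
  have hyc : y ≠ c := by rintro rfl; exact hy (h.rfl' _ (h.sub' hxy).2)
  have hyd : y ≠ d := by rintro rfl; exact hy hcd
  by_contra hcon
  rcases (show y < c ∨ d < y by omega) with h3 | h3
  · exact hy (h.symm _ _ (h.nc y c x d h3 h1 (by omega) (h.symm _ _ hxy) hcd))
  · exact hx (h.nc c x d y h1 (by omega) h3 hcd hxy)

theorem kr2 (h : NCE n P) {m c : ℕ} (hmc : P m c) (hm : 0 < m)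
    (hn : ∀ y, P c y → m ≤ y ∧ y ≤ c) : Kr P (m-1) c := by
  have hmc' := hn m (h.symm _ _ hmc)
  refine h.kr_of (by omega) fun x y hxy h1 h2 => ?_
  by_contra hcon
  have hy : ¬ P c y := fun hy => by have := hn y hy; omega
  have hx : ¬ P c x := fun hx => hy (h.trans _ _ _ hx hxy)
  have hxc : x ≠ c := by rintro rfl; exact hx (h.rfl' _ (h.sub' hxy).1)
  have hxm : x ≠ m := by rintro rfl; exact hx (h.symm _ _ hmc)
  rcases (show y < m ∨ c < y by omega) with h3 | h3
  · have := h.nc y m x c h3 (by omega) (by omega) (h.symm _ _ hxy) hmc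
    exact hy (h.trans _ _ _ (h.symm _ _ hmc) (h.symm _ _ this))
  · have := h.nc m x c y (by omega) (by omega) h3 hmc hxy
    exact hx (h.trans _ _ _ (h.symm _ _ hmc) this)

theorem kr3 (h : NCE n P) {c : ℕ} (h0 : P 0 c) (hn : ∀ y, P c y → y ≤ c) : Kr P c n := by
  have hc := h.sub' h0
  refine h.kr_of (by omega) fun x y hxy h1 h2 => ?_
  by_contra hcon
  have hyn := h.sub' hxy
  have hx : ¬ P c x := fun hx => by have := hn x hx; omega
  have hy : ¬ P c y := fun hy => hx (h.trans _ _ _ hy (h.symm _ _ hxy))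
  have hyc : y ≠ c := by rintro rfl; exact hy (h.rfl' _ (h.sub' hxy).2)
  have hy0 : y ≠ 0 := by rintro rfl; exact hy (h.symm _ _ h0)
  have := h.nc 0 y c x (by omega) (by omega) h1 h0 (h.symm _ _ hxy)
  exact hy (h.trans _ _ _ (h.symm _ _ h0) this)

end NCE

/-- identify `n+1` with `0` -/
def md (n u : ℕ) : ℕ := if u = n + 1 then 0 else u
theorem md_le {n u : ℕ} (h : u ≤ n) : md n u = u := by rw [md, if_neg]; omega
theorem md_top (n : ℕ) : md n (n+1) = 0 := by rw [md, if_pos rfl]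

/-- alternating relation associated with a non-crossing relation -/
def RP (n : ℕ) (P : ℕ → ℕ → Prop) (x y : ℕ) : Prop :=
  x ≤ 2*n+2 ∧ y ≤ 2*n+2 ∧ x % 2 = y % 2 ∧ (x % 2 = 0 → P (md n (x/2)) (md n (y/2))) ∧
    (x % 2 = 1 → Kr P (x/2) (y/2))

theorem RP_even {n : ℕ} {P : ℕ → ℕ → Prop} {u v : ℕ} :
    RP n P (2*u) (2*v) ↔ u ≤ n+1 ∧ v ≤ n+1 ∧ P (md n u) (md n v) := by
  have e1 : 2*u/2 = u := by omega
  have e2 : 2*v/2 = v := by omega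
  simp only [RP, e1, e2]
  constructor
  · rintro ⟨h1, h2, h3, h4, h5⟩
    exact ⟨by omega, by omega, h4 (by omega)⟩
  · rintro ⟨h1, h2, h3⟩
    exact ⟨by omega, by omega, by omega, fun _ => h3, fun h => by omega⟩

theorem RP_odd {n : ℕ} {P : ℕ → ℕ → Prop} {u v : ℕ} :
    RP n P (2*u+1) (2*v+1) ↔ u ≤ n ∧ v ≤ n ∧ Kr P u v := by
  have e1 : (2*u+1)/2 = u := by omega
  have e2 : (2*v+1)/2 = v := by omega
  simp only [RP, e1, e2]
  constructor
  · rintro ⟨h1, h2, h3, h4, h5⟩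
    exact ⟨by omega, by omega, h5 (by omega)⟩
  · rintro ⟨h1, h2, h3⟩
    exact ⟨by omega, by omega, by omega, fun h => by omega, fun _ => h3⟩

theorem par_cases (x y : ℕ) (h : x % 2 = y % 2) :
    (∃ u v, x = 2*u ∧ y = 2*v) ∨ (∃ u v, x = 2*u+1 ∧ y = 2*v+1) := by
  by_cases hx : x % 2 = 0
  · exact Or.inl ⟨x/2, y/2, by omega, by omega⟩
  · exact Or.inr ⟨x/2, y/2, by omega, by omega⟩

theorem RP_good {n : ℕ} {P : ℕ → ℕ → Prop} (h : NCE n P) : GR 0 (2*n+2) (RP n P) := by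
  have mdn : ∀ u, u ≤ n + 1 → md n u ≤ n := fun u hu => by rw [md]; split_ifs <;> omega
  refine ⟨?_, ?_, ?_, ?_, ?_, ?_, ?_⟩
  · rintro x y ⟨h1, h2, -⟩; omega
  · intro x _ hx
    exact ⟨hx, hx, rfl, fun _ => h.rfl' _ (mdn _ (by omega)), fun _ => Kr.refl _ _⟩
  · rintro x y ⟨h1, h2, h3, h4, h5⟩
    exact ⟨h2, h1, h3.symm, fun e => h.symm _ _ (h4 (by omega)), fun e => (h5 (by omega)).symm⟩
  · rintro x y t ⟨h1, h2, h3, h4, h5⟩ ⟨k1, k2, k3, k4, k5⟩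
    exact ⟨h1, k2, by omega, fun e => h.trans _ _ _ (h4 e) (k4 (by omega)),
      fun e => (h5 e).trans (k5 (by omega))⟩
  · rintro x y ⟨h1, h2, h3, -⟩; exact h3
  · intro x y _ hxy hy hp
    rcases par_cases x y hp with ⟨u, v, rfl, rfl⟩ | ⟨u, v, rfl, rfl⟩
    · rw [RP_even]
      constructor
      · rintro ⟨hu, hv, hP⟩ p q hp1 hp2 hpp hpq
        obtain ⟨p, q, rfl, rfl⟩ : ∃ p' q', p = 2*p'+1 ∧ q = 2*q'+1 :=
          ⟨p/2, q/2, by omega, by have := hpq.2.2.1; omega⟩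
        rw [RP_odd] at hpq
        obtain ⟨-, hq, hk⟩ := hpq
        have hk := hk _ _ hP
        rw [md_le (show u ≤ n by omega)] at hk
        by_cases hv' : v = n + 1
        · subst hv'
          rw [md_top] at hk
          omega
        · rw [md_le (show v ≤ n by omega)] at hk
          omega
      · intro H
        refine ⟨by omega, by omega, ?_⟩
        rw [md_le (show u ≤ n by omega)]
        have H' : ∀ p q, u ≤ p → p < v → q ≤ n → Kr P p q → u ≤ q ∧ q < v := by
          intro p q h1 h2 h3 h4
          have := H (2*p+1) (2*q+1) (by omega) (by omega) (by omega)
            (RP_odd.2 ⟨by omega, h3, h4⟩)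
          omega
        obtain ⟨c, ⟨hc1, hc2, hc3⟩, hc4⟩ : ∃ c, (u ≤ c ∧ c < v ∧ P u c) ∧
            ∀ y, u ≤ y → y < v → P u y → y ≤ c := by
          let S := (Ico u v).filter (fun y => P u y)
          have hS : S.Nonempty := ⟨u, by simp [S, h.rfl' u (by omega)]; omega⟩
          refine ⟨S.max' hS, ?_, ?_⟩
          · have := S.max'_mem hS
            simpa only [S, mem_filter, mem_Ico, and_assoc] using this
          · intro y h1 h2 h3
            exact S.le_max' y (by simp [S, *])
        by_cases hex : ∃ y, P c y ∧ c < y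
        · have hd := Nat.find_spec hex
          have hd' : ∀ y, P c y → c < y → Nat.find hex ≤ y := fun y h1 h2 => Nat.find_min' hex ⟨h1, h2⟩
          generalize Nat.find hex = d at hd hd'
          have hk := h.kr1 hd.1 hd.2 hd'
          have hdn := h.sub' hd.1
          have k1 := H' c (d-1) hc1 hc2 (by omega) hk
          have hPd := h.trans _ _ _ hc3 hd.1
          have k2 : v ≤ d := by
            by_contra hcon
            have := hc4 d (by omega) (by omega) hPd
            omega
          have : d = v := by omega
          subst this
          rw [md_le hdn.2]; exact hPd
        · push Not at hex
          have hex0 : ∃ y, P c y := ⟨c, h.rfl' _ (by omega)⟩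
          have hm := Nat.find_spec hex0
          have hm' : ∀ y, P c y → Nat.find hex0 ≤ y := fun y h1 => Nat.find_min' hex0 h1
          generalize Nat.find hex0 = m at hm hm'
          have hmu := hm' u (h.symm _ _ hc3)
          rcases Nat.eq_zero_or_pos m with rfl | hm0
          · have hk := h.kr3 (h.symm _ _ hm) hex
            have k1 := H' c n hc1 hc2 le_rfl hk
            have : v = n + 1 := by omega
            subst this
            rw [md_top]
            exact h.trans _ _ _ hc3 hm
          · have hk := h.kr2 (h.symm _ _ hm) hm0 (fun y hy => ⟨hm' y hy, hex y hy⟩)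
            have k1 := H' c (m-1) hc1 hc2 (by omega) hk.symm
            omega
    · rw [RP_odd]
      constructor
      · rintro ⟨hu, hv, hk⟩ p q hp1 hp2 hpp hpq
        obtain ⟨p, q, rfl, rfl⟩ : ∃ p' q', p = 2*p' ∧ q = 2*q' :=
          ⟨p/2, q/2, by omega, by have := hpq.2.2.1; omega⟩
        rw [RP_even] at hpq
        obtain ⟨-, hq, hP⟩ := hpq
        rw [md_le (show p ≤ n by omega)] at hP
        have := (h.kr_iff (show u ≤ v by omega)).1 hk _ _ hP (by omega) (by omega)
        by_cases hq' : q = n + 1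
        · subst hq'
          rw [md_top] at this
          omega
        · rw [md_le (show q ≤ n by omega)] at this
          omega
      · intro H
        refine ⟨by omega, by omega, (h.kr_of (show u ≤ v by omega)) fun x y hP h1 h2 => ?_⟩
        have hn := h.sub' hP
        have := H (2*x) (2*y) (by omega) (by omega) (by omega)
          (RP_even.2 ⟨by omega, by omega, by rw [md_le hn.1, md_le hn.2]; exact hP⟩)
        omega
  · have := (RP_even (n := n) (P := P) (u := 0) (v := n+1)).2
      ⟨by omega, by omega, by rw [md_le (by omega), md_top]; exact h.rfl' 0 (by omega)⟩
    exact this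

/-- good relations come from non-crossing relations -/
theorem GR.toNCE {n : ℕ} {R : ℕ → ℕ → Prop} (h : GR 0 (2*n+2) R) :
    NCE n (fun x y => x ≤ n ∧ y ≤ n ∧ R (2*x) (2*y)) := by
  refine ⟨?_, ?_, ?_, ?_, ?_⟩
  · exact fun x y h => h.1
  · exact fun x hx => ⟨hx, hx, h.rfl' _ (by omega) (by omega)⟩
  · exact fun x y h' => ⟨h'.2.1, h'.1, h.symm _ _ h'.2.2⟩
  · exact fun x y t h1 h2 => ⟨h1.1, h2.2.1, h.trans _ _ _ h1.2.2 h2.2.2⟩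
  · intro i j k l h1 h2 h3 h4 h5
    exact ⟨h4.1, h5.1, h.nc h4.2.2 h5.2.2 (by omega) (by omega) (by omega)⟩

theorem GR.ext_even {a b : ℕ} {R R' : ℕ → ℕ → Prop} (h : GR a b R) (h' : GR a b R')
    (he : ∀ x y, x % 2 = 0 → y % 2 = 0 → (R x y ↔ R' x y)) (x y : ℕ) : R x y ↔ R' x y := by
  have key : ∀ R R' : ℕ → ℕ → Prop, GR a b R → GR a b R' →
      (∀ x y, x % 2 = 0 → y % 2 = 0 → (R x y ↔ R' x y)) → ∀ x y, x < y → R x y → R' x y := by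
    intro R R' h h' he x y hlt hxy
    have hp := h.par _ _ hxy
    have hs := h.sub' hxy
    by_cases hx : x % 2 = 0
    · exact (he x y hx (by omega)).1 hxy
    · refine (h'.comp x y hs.1 hlt hs.2.2.2 hp).2 fun u v h1 h2 h3 h4 => ?_
      have := h'.par _ _ h4
      exact h.opp hxy ((he u v (by omega) (by omega)).2 h4) h1 h2 h3
  rcases lt_trichotomy x y with hlt | rfl | hlt
  · exact ⟨key R R' h h' he x y hlt, key R' R h' h (fun x y hx hy => (he x y hx hy).symm) x y hlt⟩
  · constructor
    · intro hx; have := h.sub' hx; exact h'.rfl' _ this.1 this.2.1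
    · intro hx; have := h'.sub' hx; exact h.rfl' _ this.1 this.2.1
  · constructor
    · intro hx; exact h'.symm _ _ (key R R' h h' he y x hlt (h.symm _ _ hx))
    · intro hx
      exact h.symm _ _ (key R' R h' h (fun x y hx hy => (he x y hx hy).symm) y x hlt (h'.symm _ _ hx))

theorem GR.RP_toNCE {n : ℕ} {R : ℕ → ℕ → Prop} (h : GR 0 (2*n+2) R) (x y : ℕ) :
    RP n (fun x y => x ≤ n ∧ y ≤ n ∧ R (2*x) (2*y)) x y ↔ R x y := by
  refine GR.ext_even (RP_good h.toNCE) h ?_ x y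
  intro x y hx hy
  obtain ⟨u, rfl⟩ : ∃ u, x = 2*u := ⟨x/2, by omega⟩
  obtain ⟨v, rfl⟩ : ∃ u, y = 2*u := ⟨y/2, by omega⟩
  rw [RP_even]
  have key : ∀ u, u ≤ n+1 → md n u ≤ n ∧ R (2 * u) (2 * md n u) := by
    intro u hu
    by_cases hun : u = n+1
    · subst hun
      rw [md_top]
      exact ⟨by omega, h.symm _ _ h.ab⟩
    · rw [md_le (by omega)]
      exact ⟨by omega, h.rfl' _ (by omega) (by omega)⟩
  constructor
  · rintro ⟨h1, h2, -, -, h3⟩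
    exact h.trans _ _ _ (key u h1).2 (h.trans _ _ _ h3 (h.symm _ _ (key v h2).2))
  · intro hR
    have hs := h.sub' hR
    have h1 : u ≤ n+1 := by omega
    have h2 : v ≤ n+1 := by omega
    exact ⟨h1, h2, (key u h1).1, (key v h2).1,
      h.trans _ _ _ (h.symm _ _ (key u h1).2) (h.trans _ _ _ hR (key v h2).2)⟩

section FPsec
variable {m n : ℕ}

theorem SB.refl (π : FP m) (a : Fin m) : SameBlock π a a := by
  obtain ⟨B, hB, ha⟩ := π.exists_mem (mem_univ a)
  exact ⟨B, hB, ha, ha⟩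
theorem SB.symm {π : FP m} {a b : Fin m} (h : SameBlock π a b) : SameBlock π b a := by
  obtain ⟨B, hB, ha, hb⟩ := h
  exact ⟨B, hB, hb, ha⟩
theorem SB.mem {π : FP m} {a b : Fin m} (h : SameBlock π a b) {B} (hB : B ∈ π.parts)
    (ha : a ∈ B) : b ∈ B := by
  obtain ⟨B', hB', ha', hb'⟩ := h
  rwa [π.eq_of_mem_parts hB hB' ha ha']
theorem SB.trans {π : FP m} {a b c : Fin m} (h : SameBlock π a b) (h' : SameBlock π b c) :
    SameBlock π a c := by
  obtain ⟨B, hB, ha, hb⟩ := h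
  exact ⟨B, hB, ha, SB.mem h' hB hb⟩

/-- the block of `a` -/
noncomputable def pt (π : FP m) (a : Fin m) : Finset (Fin m) := univ.filter (SameBlock π a)
theorem mem_pt {π : FP m} {a b : Fin m} : b ∈ pt π a ↔ SameBlock π a b := by simp [pt]
theorem pt_eq {π : FP m} {a : Fin m} {B} (hB : B ∈ π.parts) (ha : a ∈ B) : pt π a = B := by
  ext b
  rw [mem_pt]
  exact ⟨fun h => SB.mem h hB ha, fun h => ⟨B, hB, ha, h⟩⟩
theorem pt_mem (π : FP m) (a : Fin m) : pt π a ∈ π.parts := by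
  obtain ⟨B, hB, ha⟩ := π.exists_mem (mem_univ a)
  rwa [pt_eq hB ha]
theorem pt_self (π : FP m) (a : Fin m) : a ∈ pt π a := mem_pt.2 (SB.refl π a)

theorem FP_ext {π ρ : FP m} (h : ∀ a b, SameBlock π a b ↔ SameBlock ρ a b) : π = ρ := by
  have e : ∀ a, pt π a = pt ρ a := fun a => by ext b; rw [mem_pt, mem_pt, h]
  have key : ∀ π ρ : FP m, (∀ a, pt π a = pt ρ a) → π.parts ⊆ ρ.parts := by
    intro π ρ e B hB
    obtain ⟨a, ha⟩ := π.nonempty_of_mem_parts hB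
    rw [← pt_eq hB ha, e]; exact pt_mem _ _
  exact Finpartition.ext (Subset.antisymm (key _ _ e) (key _ _ fun a => (e a).symm))

theorem prod_parts (π : FP m) (U : Finset (Fin m) → ℂ) :
    ∏ B ∈ π.parts, U B = ∏ a : Fin m, if ∀ y, SameBlock π a y → a ≤ y then U (pt π a) else 1 := by
  rw [← prod_filter]
  symm
  refine prod_bij (fun a _ => pt π a) (fun a _ => pt_mem _ _) ?_ ?_ (fun _ _ => rfl)
  · intro a ha b hb hab
    simp only [mem_filter, mem_univ, true_and] at ha hb
    have h1 : SameBlock π a b := by rw [← mem_pt, hab]; exact pt_self _ _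
    exact le_antisymm (ha _ h1) (hb _ (SB.symm h1))
  · intro B hB
    have hne := π.nonempty_of_mem_parts hB
    refine ⟨B.min' hne, ?_, pt_eq hB (B.min'_mem hne)⟩
    simp only [mem_filter, mem_univ, true_and]
    intro y hy
    exact B.min'_le y (SB.mem hy hB (B.min'_mem hne))

theorem exists_FP (r : Fin m → Fin m → Prop) (h1 : ∀ a, r a a) (h2 : ∀ a b, r a b → r b a)
    (h3 : ∀ a b c, r a b → r b c → r a c) : ∃ π : FP m, ∀ a b, SameBlock π a b ↔ r a b := by
  let s : Setoid (Fin m) := ⟨r, h1, fun {a b} => h2 a b, fun {a b c} => h3 a b c⟩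
  refine ⟨Finpartition.ofSetoid s, fun a b => ?_⟩
  rw [SameBlock]
  simp only [and_comm (a := a ∈ _)]
  rw [← Finpartition.mem_part_iff_exists, Finpartition.mem_part_ofSetoid_iff_rel]
  rfl

/-- pointwise characterization of the successor in a block -/
def IsNxt (π : FP m) (b c : Fin m) : Prop := SameBlock π b c ∧
  ((b < c ∧ ∀ x, SameBlock π b x → b < x → c ≤ x) ∨
    ((∀ x, SameBlock π b x → x ≤ b) ∧ (∀ x, SameBlock π b x → c ≤ x)))

theorem isAssoc_iff {π : FP m} {σ : Equiv.Perm (Fin m)} :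
    IsAssocPerm π σ ↔ ∀ b, IsNxt π b (σ b) := by
  constructor
  · intro h b
    obtain ⟨h1, h2⟩ := h _ (pt_mem π b) b (pt_self π b)
    refine ⟨mem_pt.1 h1, ?_⟩
    rcases h2 with h2 | h2
    · exact Or.inl ⟨h2.1, fun x hx => h2.2 x (mem_pt.2 hx)⟩
    · exact Or.inr ⟨fun x hx => h2.1.2 x (mem_pt.2 hx), fun x hx => h2.2.2 x (mem_pt.2 hx)⟩
  · intro h B hB b hb
    obtain ⟨h1, h2⟩ := h b
    have hs := SB.mem h1 hB hb
    refine ⟨hs, ?_⟩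
    rcases h2 with h2 | h2
    · exact Or.inl ⟨h2.1, fun x hx => h2.2 x ⟨B, hB, hb, hx⟩⟩
    · exact Or.inr ⟨⟨hb, fun x hx => h2.1 x ⟨B, hB, hb, hx⟩⟩, ⟨hs, fun x hx => h2.2 x ⟨B, hB, hb, hx⟩⟩⟩

theorem IsNxt.unique {π : FP m} {b c d : Fin m} (h : IsNxt π b c) (h' : IsNxt π b d) : c = d := by
  obtain ⟨h1, h2 | h2⟩ := h <;> obtain ⟨k1, k2 | k2⟩ := h'
  · exact le_antisymm (h2.2 _ k1 k2.1) (k2.2 _ h1 h2.1)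
  · exact absurd h2.1 (not_lt.2 (k2.1 _ h1))
  · exact absurd k2.1 (not_lt.2 (h2.1 _ k1))
  · exact le_antisymm (h2.2 _ k1) (k2.2 _ h1)

theorem IsNxt.inj {π : FP m} {b b' c : Fin m} (h : IsNxt π b c) (h' : IsNxt π b' c) : b = b' := by
  have key : ∀ b b', IsNxt π b c → IsNxt π b' c → ¬ b < b' := by
    rintro b b' ⟨h1, h2⟩ ⟨k1, k2⟩ hlt
    have hs := SB.trans h1 (SB.symm k1)
    rcases h2 with h2 | h2
    · have q := h2.2 _ hs hlt
      rcases k2 with k2 | k2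
      · exact absurd k2.1 (not_lt.2 q)
      · exact absurd h2.1 (not_lt.2 (k2.2 _ (SB.symm hs)))
    · exact absurd hlt (not_lt.2 (h2.1 _ hs))
  exact le_antisymm (not_lt.1 (key _ _ h' h)) (not_lt.1 (key _ _ h h'))

theorem IsNxt.exists (π : FP m) (b : Fin m) : ∃ c, IsNxt π b c := by
  by_cases hex : ((pt π b).filter (b < ·)).Nonempty
  · refine ⟨((pt π b).filter (b < ·)).min' hex, ?_⟩
    have := ((pt π b).filter (b < ·)).min'_mem hex
    rw [mem_filter, mem_pt] at this
    exact ⟨this.1, Or.inl ⟨this.2, fun x hx hbx =>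
      min'_le _ _ (mem_filter.2 ⟨mem_pt.2 hx, hbx⟩)⟩⟩
  · have hne : (pt π b).Nonempty := ⟨b, pt_self π b⟩
    refine ⟨(pt π b).min' hne, mem_pt.1 (min'_mem _ _), Or.inr ⟨fun x hx => ?_, fun x hx =>
      min'_le _ _ (mem_pt.2 hx)⟩⟩
    by_contra hcon
    exact hex ⟨x, mem_filter.2 ⟨mem_pt.2 hx, not_le.1 hcon⟩⟩

theorem exists_assoc (π : FP m) : ∃ σ, IsAssocPerm π σ := by
  choose f hf using IsNxt.exists π
  have hinj : Function.Injective f := fun a b hab => (hf a).inj (hab ▸ hf b)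
  refine ⟨Equiv.ofBijective f (Finite.injective_iff_bijective.1 hinj), isAssoc_iff.2 fun b => ?_⟩
  exact hf b

theorem assoc_unique {π : FP m} {σ τ} (h : IsAssocPerm π σ) (h' : IsAssocPerm π τ) : σ = τ :=
  Equiv.ext fun b => (isAssoc_iff.1 h b).unique (isAssoc_iff.1 h' b)

theorem assoc_determines {π ρ : FP m} {σ} (h : IsAssocPerm π σ) (h' : IsAssocPerm ρ σ) : π = ρ := by
  have key : ∀ (π ρ : FP m), IsAssocPerm π σ → IsAssocPerm ρ σ →
      ∀ d : ℕ, ∀ a b : Fin m, a ≤ b → b.val - a.val ≤ d → SameBlock π a b → SameBlock ρ a b := by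
    intro π ρ h h' d
    induction d with
    | zero =>
      intro a b hab hd _
      have : a = b := le_antisymm hab (by rw [Fin.le_def]; omega)
      subst this; exact SB.refl _ _
    | succ d ih =>
      intro a b hab hd hs
      rcases eq_or_lt_of_le hab with rfl | hlt
      · exact SB.refl _ _
      obtain ⟨h1, h2⟩ := isAssoc_iff.1 h a
      rcases h2 with h2 | h2
      · refine SB.trans (isAssoc_iff.1 h' a).1 (ih (σ a) b (h2.2 _ hs hlt) ?_ (SB.trans (SB.symm h1) hs))
        have := h2.1
        rw [Fin.lt_def] at this; omega
      · exact absurd hlt (not_lt.2 (h2.1 _ hs))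
  have key2 : ∀ (π ρ : FP m), IsAssocPerm π σ → IsAssocPerm ρ σ →
      ∀ a b : Fin m, SameBlock π a b → SameBlock ρ a b := by
    intro π ρ h h' a b hs
    rcases le_total a b with hab | hab
    · exact key π ρ h h' _ a b hab le_rfl hs
    · exact SB.symm (key π ρ h h' _ b a hab le_rfl (SB.symm hs))
  exact FP_ext fun a b => ⟨key2 _ _ h h' a b, key2 _ _ h' h a b⟩

/-- relation on naturals attached to a partition -/
def PF (π : FP m) (x y : ℕ) : Prop := ∃ a b : Fin m, a.val = x ∧ b.val = y ∧ SameBlock π a b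

theorem PF_val {π : FP m} {a b : Fin m} : PF π a.val b.val ↔ SameBlock π a b := by
  constructor
  · rintro ⟨c, d, h1, h2, h3⟩
    rwa [Fin.ext h1, Fin.ext h2] at h3
  · intro h; exact ⟨a, b, rfl, rfl, h⟩

theorem PF_NCE {π : FP (n+1)} (h : IsNC π) : NCE n (PF π) := by
  refine ⟨?_, ?_, ?_, ?_, ?_⟩
  · rintro _ _ ⟨a, b, rfl, rfl, -⟩; omega
  · intro x hx; exact ⟨⟨x, by omega⟩, ⟨x, by omega⟩, rfl, rfl, SB.refl _ _⟩
  · rintro _ _ ⟨a, b, rfl, rfl, h⟩; exact ⟨b, a, rfl, rfl, SB.symm h⟩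
  · rintro _ _ _ ⟨a, b, rfl, rfl, h⟩ ⟨b', c, hb, rfl, h'⟩
    rw [Fin.ext hb] at h'
    exact ⟨a, c, rfl, rfl, SB.trans h h'⟩
  · rintro _ _ _ _ h1 h2 h3 ⟨a, b, rfl, rfl, h4⟩ ⟨c, d, rfl, rfl, h5⟩
    exact PF_val.2 (h a c b d h1 h2 h3 h4 h5)

theorem krew_nxt {π κ : FP (n+1)} (hnc : IsNC π)
    (hκ : ∀ a b, SameBlock κ a b ↔ Kr (PF π) a.val b.val) {b c : Fin (n+1)}
    (hc : IsNxt π c (b + 1)) : IsNxt κ b c := by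
  have hP := PF_NCE hnc
  obtain ⟨h1, h2⟩ := hc
  by_cases hb : b = Fin.last n
  · subst hb
    rw [Fin.last_add_one] at h1 h2
    rcases h2 with h2 | h2
    · exact absurd h2.1 (not_lt.2 (Fin.zero_le _))
    · have hk : Kr (PF π) c.val n := hP.kr3 (c := c.val)
        (PF_val (a := (0 : Fin (n+1))).2 (SB.symm h1)) (fun y hy => by
        obtain ⟨c', y', hc', rfl, hs⟩ := hy
        rw [Fin.ext hc'] at hs
        exact h2.1 _ hs)
      refine ⟨(hκ _ _).2 (by simpa using hk.symm), Or.inr ⟨fun x _ => Fin.le_last x, fun x hx => ?_⟩⟩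
      have hkx := (hκ _ _).1 hx
      have hcx : Kr (PF π) c.val x.val := hk.trans (by simpa using hkx)
      have := hcx _ _ (PF_val.2 h1)
      by_contra hcon
      rw [not_le, Fin.lt_def] at hcon
      simp at this
      omega
  · have hb1 : (b + 1 : Fin (n+1)).val = b.val + 1 := Fin.val_add_one_of_lt (Fin.lt_last_iff_ne_last.2 hb)
    have hPcb : PF π c.val (b.val + 1) := by rw [← hb1]; exact PF_val.2 h1
    rcases h2 with h2 | h2
    · have hlt := h2.1
      rw [Fin.lt_def, hb1] at hlt
      have hk : Kr (PF π) c.val (b.val + 1 - 1) := hP.kr1 hPcb hlt (fun y hy hcy => by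
        obtain ⟨c', y', hc', rfl, hs⟩ := hy
        rw [Fin.ext hc'] at hs
        have := h2.2 _ hs hcy
        rwa [Fin.le_def, hb1] at this)
      rw [Nat.add_sub_cancel] at hk
      refine ⟨(hκ _ _).2 hk.symm, Or.inr ⟨fun x hx => ?_, fun x hx => ?_⟩⟩
      · have hkx := hk.trans ((hκ _ _).1 hx)
        have := hkx _ _ hPcb
        rw [Fin.le_def]; omega
      · have hkx := hk.trans ((hκ _ _).1 hx)
        have := hkx _ _ hPcb
        rw [Fin.le_def]; omega
    · have hle := h2.2 c (SB.refl _ _)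
      rw [Fin.le_def, hb1] at hle
      have hk : Kr (PF π) (b.val + 1 - 1) c.val := hP.kr2 (hP.symm _ _ hPcb) (by omega) (fun y hy => by
        obtain ⟨c', y', hc', rfl, hs⟩ := hy
        rw [Fin.ext hc'] at hs
        have q1 := h2.2 _ hs
        have q2 := h2.1 _ hs
        rw [Fin.le_def, hb1] at q1
        exact ⟨q1, q2⟩)
      rw [Nat.add_sub_cancel] at hk
      refine ⟨(hκ _ _).2 hk, Or.inl ⟨by rw [Fin.lt_def]; omega, fun x hx hbx => ?_⟩⟩
      have hkx := hk.symm.trans ((hκ _ _).1 hx)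
      have := hkx _ _ hPcb
      rw [Fin.lt_def] at hbx
      rw [Fin.le_def]; omega

theorem Krew_SB {π : FP (n+1)} (hnc : IsNC π) (a b : Fin (n+1)) :
    SameBlock (Krew π) a b ↔ Kr (PF π) a.val b.val := by
  obtain ⟨κ, hκ⟩ := exists_FP (fun a b : Fin (n+1) => Kr (PF π) a.val b.val)
    (fun a => Kr.refl _ _) (fun a b h => h.symm) (fun a b c h h' => h.trans h')
  obtain ⟨σ, hσ⟩ := exists_assoc π
  have hpair : IsAssocPerm κ (σ⁻¹ * finRotate (n+1)) := by
    rw [isAssoc_iff]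
    intro b
    refine krew_nxt hnc hκ ?_
    have := isAssoc_iff.1 hσ (σ⁻¹ (b + 1))
    rw [show σ (σ⁻¹ (b + 1)) = b + 1 from σ.apply_symm_apply _] at this
    rw [Equiv.Perm.mul_apply, finRotate_apply]
    exact this
  have hex : ∃ κ, IsKrewerasPair π κ := ⟨κ, σ, _, hσ, hpair, rfl⟩
  have hK : IsKrewerasPair π (Krew π) := by
    rw [Krew, dif_pos hex]; exact hex.choose_spec
  obtain ⟨σ', τ', h1, h2, h3⟩ := hK
  rw [assoc_unique h1 hσ] at h3
  rw [h3] at h2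
  rw [assoc_determines h2 hpair, hκ]
end FPsec

section bridge
variable {n : ℕ}

noncomputable def relF (π : FP (n+1)) : Finset (ℕ × ℕ) :=
  (Icc 0 (2*n+2) ×ˢ Icc 0 (2*n+2)).filter (fun p => RP n (PF π) p.1 p.2)

theorem mem_relF {π : FP (n+1)} {x y : ℕ} : (x, y) ∈ relF π ↔ RP n (PF π) x y := by
  simp only [relF, mem_filter, mem_product, mem_Icc, and_iff_right_iff_imp]
  rintro ⟨h1, h2, -⟩; omega

theorem relF_good {π : FP (n+1)} (h : IsNC π) : Good 0 (2*n+2) (relF π) := by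
  have : (fun x y => (x, y) ∈ relF π) = RP n (PF π) := by
    funext x y; exact propext mem_relF
  rw [Good, this]; exact RP_good (PF_NCE h)

theorem relF_even {π : FP (n+1)} {a b : Fin (n+1)} :
    (2 * a.val, 2 * b.val) ∈ relF π ↔ SameBlock π a b := by
  rw [mem_relF, RP_even, md_le (by omega), md_le (by omega), PF_val]
  constructor
  · exact fun h => h.2.2
  · exact fun h => ⟨by omega, by omega, h⟩

theorem relF_surj {r : Finset (ℕ × ℕ)} (h : Good 0 (2*n+2) r) :
    ∃ π : FP (n+1), IsNC π ∧ relF π = r := by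
  have hN := GR.toNCE h
  obtain ⟨π, hπ⟩ := exists_FP (fun a b : Fin (n+1) => (2 * a.val, 2 * b.val) ∈ r)
    (fun a => h.rfl' _ (by omega) (by omega)) (fun a b hab => h.symm _ _ hab)
    (fun a b c h1 h2 => h.trans _ _ _ h1 h2)
  have e : PF π = fun x y => x ≤ n ∧ y ≤ n ∧ (2*x, 2*y) ∈ r := by
    funext x y
    refine propext ⟨?_, ?_⟩
    · rintro ⟨a, b, rfl, rfl, hs⟩
      exact ⟨by omega, by omega, (hπ _ _).1 hs⟩
    · rintro ⟨h1, h2, h3⟩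
      exact ⟨⟨x, by omega⟩, ⟨y, by omega⟩, rfl, rfl, (hπ _ _).2 h3⟩
  refine ⟨π, ?_, ?_⟩
  · intro i j k l h1 h2 h3 h4 h5
    rw [hπ] at h4 h5 ⊢
    rw [Fin.lt_def] at h1 h2 h3
    exact h.nc h4 h5 (by omega) (by omega) (by omega)
  · ext ⟨x, y⟩
    rw [mem_relF, e]
    exact GR.RP_toNCE h x y

theorem blk_zero (π : FP (n+1)) :
    blk (relF π) 0 = insert (2*(n+1)) ((pt π 0).image (fun a => 2 * a.val)) := by
  ext y
  rw [mem_blk, mem_insert, mem_image]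
  constructor
  · intro h
    have hp := (mem_relF.1 h).2.2.1
    obtain ⟨v, rfl⟩ : ∃ v, y = 2*v := ⟨y/2, by omega⟩
    have h' := RP_even (u := 0).1 (mem_relF.1 h)
    by_cases hv : v = n+1
    · left; rw [hv]
    · right
      refine ⟨⟨v, by omega⟩, mem_pt.2 ?_, rfl⟩
      rw [← relF_even]; exact h
  · rintro (rfl | ⟨a, ha, rfl⟩)
    · refine mem_relF.2 (RP_even (u := 0).2 ⟨by omega, le_rfl, ?_⟩)
      rw [md_top, md_le (by omega)]
      exact PF_val (a := (0 : Fin (n+1))).2 (SB.refl _ _)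
    · exact relF_even (a := 0).2 (mem_pt.1 ha)

theorem wt_even (W : Finset ℕ → ℂ) (π : FP (n+1)) (a : Fin (n+1)) (ha : a ≠ 0) :
    wt W (relF π) (2 * a.val) = if ∀ y, SameBlock π a y → a ≤ y then
      W ((pt π a).image (fun a => 2 * a.val)) else 1 := by
  have em : IsMn (relF π) (2 * a.val) ↔ ∀ y, SameBlock π a y → a ≤ y := by
    constructor
    · intro h y hy
      have := h _ (relF_even.2 hy)
      rw [Fin.le_def]; omega
    · intro h y hy
      have hp := (mem_relF.1 hy).2.2.1
      obtain ⟨v, rfl⟩ : ∃ v, y = 2*v := ⟨y/2, by omega⟩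
      have h' := RP_even.1 (mem_relF.1 hy)
      by_cases hv : v = n+1
      · omega
      · have := h ⟨v, by omega⟩ (relF_even.1 hy)
        rw [Fin.le_def] at this
        simp at this; omega
  rw [wt]
  by_cases hm : IsMn (relF π) (2 * a.val)
  · rw [if_pos hm, if_pos (em.1 hm)]
    congr 1
    ext y
    rw [mem_blk, mem_image]
    constructor
    · intro hy
      have hp := (mem_relF.1 hy).2.2.1
      obtain ⟨v, rfl⟩ : ∃ v, y = 2*v := ⟨y/2, by omega⟩
      have h' := RP_even.1 (mem_relF.1 hy)
      by_cases hv : v = n+1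
      · exfalso
        rw [hv, md_top, md_le (by omega)] at h'
        have := em.1 hm 0 (PF_val.1 h'.2.2)
        exact ha (Fin.le_zero_iff.1 this)
      · exact ⟨⟨v, by omega⟩, mem_pt.2 (relF_even.1 hy), rfl⟩
    · rintro ⟨b, hb, rfl⟩
      exact relF_even.2 (mem_pt.1 hb)
  · rw [if_neg hm, if_neg (fun h => hm (em.2 h))]

theorem relF_odd {π : FP (n+1)} (hnc : IsNC π) {a b : Fin (n+1)} :
    (2 * a.val + 1, 2 * b.val + 1) ∈ relF π ↔ SameBlock (Krew π) a b := by
  rw [mem_relF, RP_odd, Krew_SB hnc]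
  constructor
  · exact fun h => h.2.2
  · exact fun h => ⟨by omega, by omega, h⟩

theorem relF_odd' {π : FP (n+1)} {a : Fin (n+1)} {y : ℕ}
    (h : (2 * a.val + 1, y) ∈ relF π) : ∃ b : Fin (n+1), y = 2 * b.val + 1 := by
  obtain ⟨h1, h2, h3, -⟩ := mem_relF.1 h
  exact ⟨⟨y/2, by omega⟩, by simp; omega⟩

theorem wt_odd (W : Finset ℕ → ℂ) {π : FP (n+1)} (hnc : IsNC π) (a : Fin (n+1)) :
    wt W (relF π) (2 * a.val + 1) = if ∀ y, SameBlock (Krew π) a y → a ≤ y then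
      W ((pt (Krew π) a).image (fun a => 2 * a.val + 1)) else 1 := by
  have em : IsMn (relF π) (2 * a.val + 1) ↔ ∀ y, SameBlock (Krew π) a y → a ≤ y := by
    constructor
    · intro h y hy
      have := h _ ((relF_odd hnc).2 hy)
      rw [Fin.le_def]; omega
    · intro h y hy
      obtain ⟨b, rfl⟩ := relF_odd' hy
      have := h _ ((relF_odd hnc).1 hy)
      rw [Fin.le_def] at this; omega
  have eb : blk (relF π) (2 * a.val + 1) = (pt (Krew π) a).image (fun a => 2 * a.val + 1) := by
    ext y
    rw [mem_blk, mem_image]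
    constructor
    · intro hy
      obtain ⟨b, rfl⟩ := relF_odd' hy
      exact ⟨b, mem_pt.2 ((relF_odd hnc).1 hy), rfl⟩
    · rintro ⟨b, hb, rfl⟩
      exact (relF_odd hnc).2 (mem_pt.1 hb)
  simp only [wt, em, eb]

theorem prod_Ioc_even_odd (F : ℕ → ℂ) (n : ℕ) : ∏ x ∈ Ioc 0 (2*n), F x =
    (∏ i ∈ range n, F (2*i+1)) * ∏ i ∈ range n, F (2*(i+1)) := by
  induction n with
  | zero => simp
  | succ n ih =>
    rw [prod_range_succ, prod_range_succ, ← prod_Ioc_consecutive _ (show 0 ≤ 2*n by omega)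
      (show 2*n ≤ 2*(n+1) by omega), ih,
      ← prod_Ioc_consecutive _ (show 2*n ≤ 2*n+1 by omega) (show 2*n+1 ≤ 2*(n+1) by omega)]
    have s1 : ∀ n : ℕ, ∏ x ∈ Ioc n (n+1), F x = F (n+1) := by
      intro n; simp
    rw [s1, show 2*(n+1) = 2*n+1+1 by omega, s1]
    ring

theorem prod_wt (W : Finset ℕ → ℂ) {π : FP (n+1)} (hnc : IsNC π) :
    ∏ x ∈ Ioc 0 (2*(n+1)), wt W (relF π) x =
    (∏ a : Fin n, if ∀ y, SameBlock π a.succ y → a.succ ≤ y then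
      W ((pt π a.succ).image (fun a => 2 * a.val)) else 1) *
    ∏ B ∈ (Krew π).parts, W (B.image (fun a => 2 * a.val + 1)) := by
  rw [prod_Ioc_even_odd, mul_comm]
  congr 1
  · have htop : wt W (relF π) (2*(n+1)) = 1 := by
      rw [wt, if_neg]
      intro h
      have := h 0 ((relF_good hnc).symm _ _ (relF_good hnc).ab)
      omega
    rw [prod_range_succ, htop, mul_one, prod_range]
    refine prod_congr rfl fun a _ => ?_
    rw [← wt_even W π a.succ (Fin.succ_ne_zero a)]; rfl
  · rw [prod_parts, prod_range]
    refine prod_congr rfl fun a _ => ?_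
    rw [← wt_odd W hnc a]

theorem bridge (W0 W : Finset ℕ → ℂ) (T : FP (n+1) → ℂ)
    (h0 : ∀ π, IsNC π → T π = W0 (insert (2*(n+1)) ((pt π 0).image (fun a => 2 * a.val))) *
      ((∏ a : Fin n, if ∀ y, SameBlock π a.succ y → a.succ ≤ y then
        W ((pt π a.succ).image (fun a => 2 * a.val)) else 1) *
      ∏ B ∈ (Krew π).parts, W (B.image (fun a => 2 * a.val + 1)))) :
    (∑ π : FP (n+1), if IsNC π then T π else 0) = E W0 W (2*0) (2*(n+1)) := by
  rw [← sum_filter, E]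
  refine sum_bij (fun π _ => relF π) ?_ ?_ ?_ ?_
  · intro π hπ
    rw [mem_filter] at hπ
    rw [mem_GoodSet]; exact relF_good hπ.2
  · intro π _ ρ _ h
    refine FP_ext fun a b => ?_
    rw [← relF_even, ← relF_even, h]
  · intro r hr
    rw [mem_GoodSet] at hr
    obtain ⟨π, h1, h2⟩ := relF_surj (n := n) hr
    exact ⟨π, by simp [h1], h2⟩
  · intro π hπ
    rw [mem_filter] at hπ
    rw [h0 π hπ.2, Nat.mul_zero, prod_wt W hπ.2, blk_zero]
end bridge

section final
open Ser
variable {k : ℕ}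

/-- list version of a series -/
def hat (f : NCSeries k) : Ser k := fun l => match l with
  | [] => 0
  | a :: l => f l.length (a :: l).get

theorem hat_nil (f : NCSeries k) : hat f [] = 0 := rfl

theorem hat_ofFn (f : NCSeries k) {n : ℕ} (w : Fin (n+1) → Fin k) {l : List (Fin k)}
    (h : l = List.ofFn w) : hat f l = f n w := by
  cases l with
  | nil => simp at h
  | cons a l =>
    have hl : l.length = n := by
      have := congrArg List.length h
      simpa using this
    subst hl
    show f l.length (a :: l).get = f l.length w
    congr 1
    apply List.ofFn_injective
    rw [← h]
    exact List.ofFn_get _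

/-- extension of a word -/
def wx {n : ℕ} (w : Fin (n+1) → Fin k) (i : ℕ) : Fin k :=
  if h : i < n + 1 then w ⟨i, h⟩ else w 0
theorem wx_val {n : ℕ} (w : Fin (n+1) → Fin k) (a : Fin (n+1)) : wx w a.val = w a := by
  rw [wx, dif_pos a.isLt]

theorem word_wx {n : ℕ} (w : Fin (n+1) → Fin k) : word (wx w) 0 (n+1) = List.ofFn w := by
  apply List.ext_getElem
  · simp [word]
  · intro i h1 h2
    simp only [word, List.getElem_map, List.getElem_range', List.getElem_ofFn]
    have : i < n + 1 := by simpa using h2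
    simp [wx, this]

theorem partCoeff_eq (f : NCSeries k) {n : ℕ} (w : Fin (n+1) → Fin k) {B : Finset (Fin (n+1))}
    (hB : B.Nonempty) : partCoeff f w B = lst (wx w) (hat f) (B.image (fun a => a.val)) := by
  rw [partCoeff, dif_pos hB, lst]
  symm
  apply hat_ofFn
  have hc : B.card = B.card.pred.succ := (Nat.succ_pred_eq_of_pos (Finset.card_pos.mpr hB)).symm
  have e : (B.image (fun a => a.val)).sort =
      List.ofFn (fun j => (B.orderEmbOfFin hc j).val) := by
    have hmono : StrictMono (fun j => (B.orderEmbOfFin hc j).val) :=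
      fun i j hij => (B.orderEmbOfFin hc).strictMono hij
    have hnd : (List.ofFn (fun j => (B.orderEmbOfFin hc j).val)).Nodup :=
      List.nodup_ofFn.2 hmono.injective
    have hpw : (List.ofFn (fun j => (B.orderEmbOfFin hc j).val)).Pairwise (fun a b => a ≤ b) :=
      List.pairwise_ofFn.2 fun i j hij => (hmono hij).le
    rw [← (List.toFinset_sort (fun a b => a ≤ b) hnd).2 hpw]
    congr 1
    ext x
    simp only [mem_image, List.mem_toFinset, List.mem_ofFn]
    constructor
    · rintro ⟨a, ha, rfl⟩
      have : a ∈ Set.range (B.orderEmbOfFin hc) := by rw [range_orderEmbOfFin]; exact ha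
      obtain ⟨j, rfl⟩ := this
      exact ⟨j, rfl⟩
    · rintro ⟨j, rfl⟩
      exact ⟨_, orderEmbOfFin_mem B hc j, rfl⟩
  rw [e, List.map_ofFn]
  congr 1
  funext j
  exact wx_val w _

theorem image_half {n : ℕ} (B : Finset (Fin (n+1))) :
    (B.image (fun a => 2 * a.val)).image (· / 2) = B.image (fun a => a.val) := by
  rw [image_image]
  congr 1
  funext a
  simp
theorem image_half' {n : ℕ} (B : Finset (Fin (n+1))) :
    (B.image (fun a => 2 * a.val + 1)).image (· / 2) = B.image (fun a => a.val) := by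
  rw [image_image]
  congr 1
  funext a
  simp; omega

theorem Wt_even {n : ℕ} (w : ℕ → Fin k) (f g : Ser k) (B : Finset (Fin (n+1))) :
    Wt w f g (B.image (fun a => 2 * a.val)) = lst w f (B.image (fun a => a.val)) := by
  rw [Wt, if_pos, We, image_half]
  intro x hx
  rw [mem_image] at hx
  obtain ⟨a, -, rfl⟩ := hx
  omega

theorem Wt_odd {n : ℕ} (w : ℕ → Fin k) (f g : Ser k) {B : Finset (Fin (n+1))} (hB : B.Nonempty) :
    Wt w f g (B.image (fun a => 2 * a.val + 1)) = lst w g (B.image (fun a => a.val)) := by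
  rw [Wt, if_neg, We, image_half']
  intro h
  obtain ⟨a, ha⟩ := hB
  have := h (2 * a.val + 1) (mem_image.2 ⟨a, ha, rfl⟩)
  omega

theorem pt_nonempty {m : ℕ} (π : FP m) (a : Fin m) : (pt π a).Nonempty := ⟨a, pt_self π a⟩

theorem genCoeff_eq (f : NCSeries k) (g : Ser k) {n : ℕ} (w : Fin (n+1) → Fin k) (π : FP (n+1)) :
    genCoeff f w π = lst (wx w) (hat f) ((pt π 0).image (fun a => a.val)) *
      ∏ a : Fin n, if ∀ y, SameBlock π a.succ y → a.succ ≤ y then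
        Wt (wx w) (hat f) g ((pt π a.succ).image (fun a => 2 * a.val)) else 1 := by
  rw [genCoeff, prod_parts, Fin.prod_univ_succ, if_pos (fun y _ => Fin.zero_le y),
    partCoeff_eq f w (pt_nonempty _ _)]
  congr 1
  refine prod_congr rfl fun a _ => ?_
  rw [Wt_even, partCoeff_eq f w (pt_nonempty _ _)]

theorem erase_top {n : ℕ} (B : Finset (Fin (n+1))) :
    (insert (2*(n+1)) (B.image (fun a => 2 * a.val))).erase (2*(n+1)) =
      B.image (fun a => 2 * a.val) := by
  refine erase_insert fun h => ?_
  rw [mem_image] at h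
  obtain ⟨a, -, ha⟩ := h
  omega

theorem We_even {n : ℕ} (w : ℕ → Fin k) (f : Ser k) (B : Finset (Fin (n+1))) :
    We w f (B.image (fun a => 2 * a.val)) = lst w f (B.image (fun a => a.val)) := by
  rw [We, image_half]

theorem list_cases (l : List (Fin k)) : l = [] ∨ ∃ n, ∃ w : Fin (n+1) → Fin k, l = List.ofFn w := by
  cases l with
  | nil => exact Or.inl rfl
  | cons a l => exact Or.inr ⟨l.length, (a :: l).get, (List.ofFn_get _).symm⟩

theorem hat_boxConv (f g : NCSeries k) {H L} (h : HL (hat f) (hat g) H L) :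
    hat (boxConv f g) = phi H (hat f) := by
  refine ext' fun l => ?_
  rcases list_cases l with rfl | ⟨n, w, rfl⟩
  · rw [phi_nil]; rfl
  · rw [hat_ofFn _ w rfl, ← word_wx, ← E_plus h (wx w) (hat f) (Nat.zero_le _), boxConv]
    refine bridge _ _ _ fun π hπ => ?_
    simp only [erase_top]
    rw [We_even, genCoeff_eq f (hat g), mul_assoc]
    congr 2
    rw [genCoeff]
    refine prod_congr rfl fun B hB => ?_
    have hne := (Krew π).nonempty_of_mem_parts hB
    rw [partCoeff_eq g w hne, Wt_odd _ _ _ hne]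

theorem Ll_iff {n : ℕ} (π : FP (n+1)) : Ll π (fullPart n) ↔ SameBlock π 0 (Fin.last n) := by
  have hp : (fullPart n).parts = {univ} := rfl
  constructor
  · rintro ⟨-, h⟩
    obtain ⟨B, hB, x, y, hx, hy, h1, h2⟩ := h univ (by rw [hp]; simp)
    have e1 : x = 0 := Fin.le_zero_iff.1 (hx.2 0 (mem_univ _))
    have e2 : y = Fin.last n := le_antisymm (Fin.le_last _) (hy.2 _ (mem_univ _))
    subst e1 e2
    exact ⟨B, hB, h1, h2⟩
  · rintro ⟨B, hB, h1, h2⟩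
    refine ⟨fun B _ => ⟨univ, by rw [hp]; simp, subset_univ _⟩, fun C hC => ?_⟩
    rw [hp, mem_singleton] at hC
    subst hC
    exact ⟨B, hB, 0, Fin.last n, ⟨mem_univ _, fun y _ => Fin.zero_le _⟩,
      ⟨mem_univ _, fun y _ => Fin.le_last _⟩, h1, h2⟩

theorem hat_Reta (f : NCSeries k) {H L} (h : HL (hat f) ones H L) :
    hat (Reta f) = ∑ i, L i := by
  refine ext' fun l => ?_
  rw [sum_app]
  rcases list_cases l with rfl | ⟨n, w, rfl⟩
  · simp only [h.L_nil]; simp [hat_nil]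
  · have e1 : ∑ i, L i (List.ofFn w) = E (We (wx w) (hat f)) (Wt (wx w) (hat f) ones) (2*0) (2*n) := by
      rw [E_even h (wx w) (hat f) (Nat.zero_le _), ← word_wx, word_append _ (Nat.zero_le _)]
      simp only [h.2, mul_z_append]
      rw [sum_ite_eq]; simp
    rw [e1, hat_ofFn _ w rfl, ← E_reta (wx w) (fun i => rfl) _ (Nat.zero_le _), Reta]
    have e2 : ∀ π : FP (n+1), (if IsNC π ∧ Ll π (fullPart n) then genCoeff f w π else 0) =
        if IsNC π then (if SameBlock π 0 (Fin.last n) then genCoeff f w π else 0) else 0 := by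
      intro π
      rw [Ll_iff, ite_and]
    rw [sum_congr rfl fun π _ => e2 π]
    refine bridge _ _ _ fun π hπ => ?_
    have e3 : (2 * n ∈ insert (2*(n+1)) ((pt π 0).image (fun a => 2 * a.val))) ↔
        SameBlock π 0 (Fin.last n) := by
      rw [mem_insert, mem_image]
      constructor
      · rintro (h | ⟨a, ha, han⟩)
        · omega
        · have : a = Fin.last n := Fin.ext (by simp; omega)
          subst this
          exact mem_pt.1 ha
      · intro h
        exact Or.inr ⟨Fin.last n, mem_pt.2 h, by simp⟩
    have e4 : ∏ B ∈ (Krew π).parts, Wt (wx w) (hat f) ones (B.image (fun a => 2 * a.val + 1)) = 1 := by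
      refine prod_eq_one fun B hB => ?_
      rw [Wt_odd _ _ _ ((Krew π).nonempty_of_mem_parts hB)]; rfl
    rw [e4, mul_one]
    by_cases hs : SameBlock π 0 (Fin.last n)
    · rw [if_pos hs, if_pos (e3.2 hs), erase_top, We_even, genCoeff_eq f ones]
    · rw [if_neg hs, if_neg (fun h => hs (e3.1 h)), zero_mul]

theorem final (f g : NCSeries k) : Reta (boxConv f g) = boxConv (Reta f) (Reta g) := by
  obtain ⟨H1, L1, hF⟩ := HL.exists (hat f) ones
  obtain ⟨H2, L2, hG⟩ := HL.exists (hat g) ones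
  obtain ⟨H, L, hp⟩ := HL.exists (hat f) (hat g)
  obtain ⟨H', L', hP⟩ := HL.exists (hat (Reta f)) (hat (Reta g))
  obtain ⟨Hr, Lr, hR⟩ := HL.exists (hat (boxConv f g)) ones
  have key := main_alg (hat_nil f) (hat_nil g) hF (hat_Reta f hF) hG (hat_Reta g hG) hp
    (hat_boxConv f g hp) hP (hat_boxConv _ _ hP) hR (hat_Reta _ hR)
  funext n w
  rw [← hat_ofFn (Reta (boxConv f g)) w rfl, key, hat_ofFn _ w rfl]
end final

/-- Theorem 7.2 / Theorem 2': `Reta` is a homomorphism for the boxed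
convolution: `Reta (f ⊡ g) = Reta f ⊡ Reta g`.  (Equivalently, in terms of
distributions, `η_{μ ⊠ ν} = η_μ ⊡ η_ν` for all `μ, ν ∈ D_alg(k)`.) -/
theorem statement19 (k : ℕ) (hk : 0 < k) (f g : NCSeries k) :
    Reta (boxConv f g) = boxConv (Reta f) (Reta g) := by
  exact final f g
end BBP
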